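/- arXiv:1401.6252 — 3 statements merged into one kernel-verified Lean document; each statement's English description precedes it below -/
import Mathlib

section
/- Let k be a positive integer such that there exists no binary extremal doubly even self-dual code of length 24k+8 (a condition known to hold for every k ≥ 159). Then the minimum Lee weight of every self-dual Z4-code of length 24k+8 is neither 8k+6 nor 8k+8; combined with Rains's bound d_L ≤ 8k+8 for such codes, the minimum Lee weight is at most 8k+4. -/
open Finset

namespace Z4Note

variable {ι : Type*} [Fintype ι]

/-- Hamming weight of a binary vector. -/
def hWt (x : ι → ZMod 2) : ℕ := (Finset.univ.filter fun i => x i ≠ 0).card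

/-- Lee value of an element of `ZMod 4`:  0 ↦ 0, 1 ↦ 1, 2 ↦ 2, 3 ↦ 1. -/
def leeVal (a : ZMod 4) : ℕ := min a.val (4 - a.val)

/-- Lee weight `n₁(x) + 2 n₂(x) + n₃(x)`. -/
def leeWt (x : ι → ZMod 4) : ℕ := ∑ i, leeVal (x i)

/-- Euclidean weight `n₁(x) + 4 n₂(x) + n₃(x)`. -/
def eucWt (x : ι → ZMod 4) : ℕ := ∑ i, (leeVal (x i)) ^ 2

/-- Number of coordinates of `x` equal to `a`. -/
def nCount (a : ZMod 4) (x : ι → ZMod 4) : ℕ := (Finset.univ.filter fun i => x i = a).card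

/-- Dual of a `ZMod 4`-code (as a set), w.r.t. the standard inner product. -/
def dualZ4 (C : Set (ι → ZMod 4)) : Set (ι → ZMod 4) :=
  {x | ∀ y ∈ C, ∑ i, x i * y i = 0}

/-- Dual of a binary code (as a set), w.r.t. the standard inner product. -/
def dual2 (C : Set (ι → ZMod 2)) : Set (ι → ZMod 2) :=
  {x | ∀ y ∈ C, ∑ i, x i * y i = 0}

/-- A `ZMod 4`-code is self-dual if it equals its dual. -/
def SelfDualZ4 (C : Submodule (ZMod 4) (ι → ZMod 4)) : Prop :=
  (C : Set (ι → ZMod 4)) = dualZ4 (C : Set (ι → ZMod 4))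

/-- A binary code is self-dual if it equals its dual. -/
def SelfDual2 (D : Submodule (ZMod 2) (ι → ZMod 2)) : Prop :=
  (D : Set (ι → ZMod 2)) = dual2 (D : Set (ι → ZMod 2))

/-- Coordinatewise reduction modulo 2. -/
def res2 (x : ι → ZMod 4) : ι → ZMod 2 :=
  fun i => ZMod.castHom (by norm_num : (2:ℕ) ∣ 4) (ZMod 2) (x i)

/-- The residue code `C⁽¹⁾ = {c mod 2 : c ∈ C}`. -/
def residue (C : Set (ι → ZMod 4)) : Set (ι → ZMod 2) := res2 '' C

/-- Minimum Lee weight among nonzero codewords. -/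
noncomputable def minLee (C : Set (ι → ZMod 4)) : ℕ := sInf {d | ∃ x ∈ C, x ≠ 0 ∧ leeWt x = d}

/-- Minimum Euclidean weight among nonzero codewords. -/
noncomputable def minEuc (C : Set (ι → ZMod 4)) : ℕ := sInf {d | ∃ x ∈ C, x ≠ 0 ∧ eucWt x = d}

/-- Minimum Hamming weight among nonzero codewords of a binary code. -/
noncomputable def minHam (C : Set (ι → ZMod 2)) : ℕ := sInf {d | ∃ x ∈ C, x ≠ 0 ∧ hWt x = d}

/-- A binary code is doubly even if all weights are divisible by 4. -/
def DoublyEven (C : Set (ι → ZMod 2)) : Prop := ∀ x ∈ C, 4 ∣ hWt x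

/-- A binary code is singly even if some codeword has weight not divisible by 4. -/
def SinglyEven (C : Set (ι → ZMod 2)) : Prop := ∃ x ∈ C, ¬ 4 ∣ hWt x

/-- A self-dual `ZMod 4`-code is Type II if all Euclidean weights are divisible by 8. -/
def TypeII (C : Set (ι → ZMod 4)) : Prop := ∀ x ∈ C, 8 ∣ eucWt x

/-- The doubly even subcode of a binary code. -/
def evenSubcode (D : Set (ι → ZMod 2)) : Set (ι → ZMod 2) := {x ∈ D | 4 ∣ hWt x}

/-- The shadow `S = D₀^⊥ \ D` of a binary code. -/
def shadow (D : Set (ι → ZMod 2)) : Set (ι → ZMod 2) := dual2 (evenSubcode D) \ D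

/-- A binary singly even self-dual code is s-extremal if equality holds in the
Bachoc–Gaborit bound relating the minimum weight of the code and of its shadow. -/
def SExtremal (D : Submodule (ZMod 2) (ι → ZMod 2)) : Prop :=
  SelfDual2 D ∧ SinglyEven (D : Set (ι → ZMod 2)) ∧
  ((¬ (Fintype.card ι % 24 = 22 ∧
        minHam (D : Set (ι → ZMod 2)) = 4 * (Fintype.card ι / 24) + 6)) →
      minHam (shadow (D : Set (ι → ZMod 2))) + 2 * minHam (D : Set (ι → ZMod 2)) =
        Fintype.card ι / 2 + 4) ∧
  ((Fintype.card ι % 24 = 22 ∧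
        minHam (D : Set (ι → ZMod 2)) = 4 * (Fintype.card ι / 24) + 6) →
      minHam (shadow (D : Set (ι → ZMod 2))) + 2 * minHam (D : Set (ι → ZMod 2)) =
        Fintype.card ι / 2 + 8)

/-- Equivalence of `ZMod 4`-codes: coordinate permutation together with sign changes. -/
def Z4Equiv (C C' : Set (ι → ZMod 4)) : Prop :=
  ∃ σ : Equiv.Perm ι, ∃ ε : ι → ZMod 4, (∀ i, ε i = 1 ∨ ε i = -1) ∧
    C' = (fun x => fun i => ε i * x (σ i)) '' C

/-- Covering radius of a binary code. -/
noncomputable def covRad (C : Set (ι → ZMod 2)) : ℕ :=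
  sInf {R | ∀ v : ι → ZMod 2, ∃ c ∈ C, hWt (v - c) ≤ R}

/-- Entry `(i,j)` of the circulant matrix with first row `r`. -/
def circEntry {m : ℕ} (r : Fin m → ZMod 4) (i j : Fin m) : ZMod 4 := r (j - i)

/-- Entry `(i,j)` of the negacirculant matrix with first row `r`. -/
def negaEntry {m : ℕ} (r : Fin m → ZMod 4) (i j : Fin m) : ZMod 4 :=
  if i.val ≤ j.val then r (j - i) else - r (j - i)

/-- The bordered part `B` of the generator matrix of a bordered double circulant code. -/
def bdcB {m : ℕ} (α β γ : ZMod 4) (r : Fin m → ZMod 4) :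
    Fin (m+1) → Fin (m+1) → ZMod 4 :=
  Fin.cases (Fin.cases α fun _ => β) (fun i' => Fin.cases γ fun j' => circEntry r i' j')

/-- Row `i` of the generator matrix `(I | B)` of a bordered double circulant code. -/
def bdcRow {m : ℕ} (α β γ : ZMod 4) (r : Fin m → ZMod 4) (i : Fin (m+1)) :
    (Fin (m+1) ⊕ Fin (m+1)) → ZMod 4 :=
  Sum.elim (fun j => if j = i then 1 else 0) (bdcB α β γ r i)

/-- The bordered double circulant code of length `2(m+1)`. -/
def bdcCode {m : ℕ} (α β γ : ZMod 4) (r : Fin m → ZMod 4) :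
    Submodule (ZMod 4) ((Fin (m+1) ⊕ Fin (m+1)) → ZMod 4) :=
  Submodule.span (ZMod 4) (Set.range (bdcRow α β γ r))

/-- The block matrix `[[A, B], [-Bᵀ, Aᵀ]]` built from negacirculant `A`, `B`. -/
def fourNegaM {n : ℕ} (a b : Fin n → ZMod 4) :
    (Fin n ⊕ Fin n) → (Fin n ⊕ Fin n) → ZMod 4
  | Sum.inl i, Sum.inl j => negaEntry a i j
  | Sum.inl i, Sum.inr j => negaEntry b i j
  | Sum.inr i, Sum.inl j => - negaEntry b j i
  | Sum.inr i, Sum.inr j => negaEntry a j i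

/-- Row `i` of the generator matrix `(I | M)` of a four-negacirculant code. -/
def fourNegaRow {n : ℕ} (a b : Fin n → ZMod 4) (i : Fin n ⊕ Fin n) :
    ((Fin n ⊕ Fin n) ⊕ (Fin n ⊕ Fin n)) → ZMod 4 :=
  Sum.elim (fun j => if j = i then 1 else 0) (fourNegaM a b i)

/-- The four-negacirculant code of length `4n`. -/
def fourNegaCode {n : ℕ} (a b : Fin n → ZMod 4) :
    Submodule (ZMod 4) (((Fin n ⊕ Fin n) ⊕ (Fin n ⊕ Fin n)) → ZMod 4) :=
  Submodule.span (ZMod 4) (Set.range (fourNegaRow a b))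

end Z4Note

namespace Z4Aux

open Z4Note Finset

section Mac

variable {ι : Type*} [Fintype ι]

/-- The finset of elements of a set of binary vectors. -/
noncomputable def fs (S : Set (ι → ZMod 2)) : Finset (ι → ZMod 2) := S.toFinite.toFinset

lemma mem_fs (S : Set (ι → ZMod 2)) (x : ι → ZMod 2) : x ∈ fs S ↔ x ∈ S := by
  simp [fs]

/-- The nontrivial additive character of `ZMod 2`. -/
def chi (K : Type*) [Field K] (a : ZMod 2) : K := if a = 0 then 1 else -1

lemma chi_add (K : Type*) [Field K] (a b : ZMod 2) : chi K (a + b) = chi K a * chi K b := by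
  have ha : a = 0 ∨ a = 1 := by revert a; decide
  have hb : b = 0 ∨ b = 1 := by revert b; decide
  have h2 : (1 + 1 : ZMod 2) = 0 := by decide
  rcases ha with rfl | rfl <;> rcases hb with rfl | rfl <;> simp [chi, h2]

lemma chi_sum (K : Type*) [Field K] {α : Type*} (s : Finset α) (f : α → ZMod 2) :
    chi K (∑ i ∈ s, f i) = ∏ i ∈ s, chi K (f i) := by
  classical
  induction s using Finset.induction_on with
  | empty => simp [chi]
  | insert a s ha ih => rw [Finset.sum_insert ha, Finset.prod_insert ha, chi_add, ih]

lemma chi_orth (K : Type*) [Field K] [CharZero K] (D : Submodule (ZMod 2) (ι → ZMod 2))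
    (v : ι → ZMod 2) (hv : v ∉ dual2 (D : Set (ι → ZMod 2))) :
    ∑ c ∈ fs (D : Set (ι → ZMod 2)), chi K (∑ i, v i * c i) = 0 := by
  simp only [dual2, Set.mem_ofPred_eq, not_forall] at hv
  obtain ⟨c0, hc0, h0⟩ := hv
  have h1 : ∑ c ∈ fs (D : Set (ι → ZMod 2)), chi K (∑ i, v i * c i)
      = ∑ c ∈ fs (D : Set (ι → ZMod 2)), - chi K (∑ i, v i * c i) := by
    refine Finset.sum_bij' (fun c _ => c + c0) (fun c _ => c - c0) ?_ ?_ ?_ ?_ ?_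
    · intro c hc
      rw [mem_fs] at *
      exact D.add_mem hc hc0
    · intro c hc
      rw [mem_fs] at *
      exact D.sub_mem hc hc0
    · intro c _; simp
    · intro c _; simp
    · intro c _
      have : ∑ i, v i * (c + c0) i = (∑ i, v i * c i) + ∑ i, v i * c0 i := by
        rw [← Finset.sum_add_distrib]
        exact Finset.sum_congr rfl fun i _ => by simp [mul_add]
      rw [this, chi_add]
      have h2 : chi K (∑ i, v i * c0 i) = -1 := if_neg h0
      rw [h2]; ring
  rw [Finset.sum_neg_distrib] at h1
  exact self_eq_neg.mp h1

lemma hWt_le (c : ι → ZMod 2) : hWt c ≤ Fintype.card ι := by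
  unfold hWt
  exact Finset.card_le_univ _

lemma pow_hWt {K : Type*} [Field K] (y : K) (v : ι → ZMod 2) :
    y ^ hWt v = ∏ i, (if v i ≠ 0 then y else 1) := by
  unfold hWt
  rw [Finset.prod_ite]; simp

lemma inner_sum [DecidableEq ι] {K : Type*} [Field K] (y : K) (c : ι → ZMod 2) :
    ∑ v : ι → ZMod 2, chi K (∑ i, v i * c i) * y ^ hWt v
      = (1 + y) ^ (Fintype.card ι - hWt c) * (1 - y) ^ hWt c := by
  have h1 : ∀ v : ι → ZMod 2, chi K (∑ i, v i * c i) * y ^ hWt v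
      = ∏ i, (chi K (v i * c i) * (if v i ≠ 0 then y else 1)) := by
    intro v
    rw [chi_sum, pow_hWt, Finset.prod_mul_distrib]
  simp_rw [h1]
  have h2 := Finset.prod_univ_sum (fun _ : ι => (Finset.univ : Finset (ZMod 2)))
    (fun i a => chi K (a * c i) * (if a ≠ 0 then y else 1))
  rw [Fintype.piFinset_univ] at h2
  rw [← h2]
  have h3 : ∀ i, ∑ a : ZMod 2, chi K (a * c i) * (if a ≠ 0 then y else 1)
      = if c i ≠ 0 then 1 - y else 1 + y := by
    intro i
    have : ∀ b : ZMod 2, ∑ a : ZMod 2, chi K (a * b) * (if a ≠ 0 then y else 1)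
      = if b ≠ 0 then 1 - y else 1 + y := by
      intro b
      have hu : (Finset.univ : Finset (ZMod 2)) = {0, 1} := by decide
      rw [hu, Finset.sum_pair (by decide)]
      by_cases hb : b = 0
      · simp [hb, chi]
      · simp [hb, chi]; ring
    exact this _
  simp_rw [h3]
  rw [Finset.prod_ite, Finset.prod_const, Finset.prod_const, mul_comm]
  have h4 := Finset.card_filter_add_card_filter_not (s := (Finset.univ : Finset ι))
    (fun i => c i ≠ 0)
  have h5 : #{i | ¬ c i ≠ 0} = Fintype.card ι - hWt c := by
    unfold hWt
    rw [Finset.card_univ] at h4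
    omega
  rw [h5]; rfl

lemma macW {K : Type*} [Field K] [CharZero K] (D : Submodule (ZMod 2) (ι → ZMod 2)) (y : K) :
    ∑ c ∈ fs (D : Set (ι → ZMod 2)), (1 + y) ^ (Fintype.card ι - hWt c) * (1 - y) ^ hWt c
      = ((fs (D : Set (ι → ZMod 2))).card : K) *
        ∑ v ∈ fs (dual2 (D : Set (ι → ZMod 2))), y ^ hWt v := by
  classical
  simp_rw [← inner_sum]
  rw [Finset.sum_comm, Finset.mul_sum]
  rw [← Finset.sum_subset (Finset.subset_univ (fs (dual2 (D : Set (ι → ZMod 2)))))]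
  · refine Finset.sum_congr rfl fun v hv => ?_
    rw [← Finset.sum_mul]
    congr 1
    rw [Finset.card_eq_sum_ones, Nat.cast_sum]
    refine Finset.sum_congr rfl fun c hc => ?_
    rw [mem_fs] at hv hc
    rw [hv c hc]; simp [chi]
  · intro v _ hv
    rw [mem_fs] at hv
    rw [← Finset.sum_mul, chi_orth K D v hv, zero_mul]

lemma card_mul_card (D : Submodule (ZMod 2) (ι → ZMod 2)) :
    (fs (D : Set (ι → ZMod 2))).card * (fs (dual2 (D : Set (ι → ZMod 2)))).card
      = 2 ^ Fintype.card ι := by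
  have h := macW (K := ℚ) D 1
  have h2 : ∑ c ∈ fs (D : Set (ι → ZMod 2)), ((1 + 1 : ℚ)) ^ (Fintype.card ι - hWt c) * (1 - 1) ^ hWt c
      = 2 ^ Fintype.card ι := by
    rw [Finset.sum_eq_single 0]
    · simp [hWt]; norm_num
    · intro c _ hc
      have : hWt c ≠ 0 := by
        unfold hWt
        rw [Finset.card_ne_zero]
        obtain ⟨i, hi⟩ := Function.ne_iff.mp hc
        exact ⟨i, by simpa using hi⟩
      simp [this]
    · intro h; exact absurd ((mem_fs _ _).mpr D.zero_mem) h
  rw [h2] at h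
  simp at h
  exact_mod_cast h.symm

end Mac

section Ext

variable {ι : Type*} [Fintype ι]

lemma hWt_eq_sum (x : ι → ZMod 2) : hWt x = ∑ i, (x i).val := by
  unfold hWt
  rw [Finset.card_filter]
  refine Finset.sum_congr rfl fun i _ => ?_
  generalize x i = a
  revert a; decide

lemma hWt_add (x y : ι → ZMod 2) :
    hWt (x + y) + 2 * (∑ i, (x i).val * (y i).val) = hWt x + hWt y := by
  simp only [hWt_eq_sum, Finset.mul_sum, ← Finset.sum_add_distrib]
  refine Finset.sum_congr rfl fun i _ => ?_
  simp only [Pi.add_apply]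
  generalize x i = a
  generalize y i = b
  revert a b; decide

lemma inner_cast (x y : ι → ZMod 2) :
    ∑ i, x i * y i = ((∑ i, (x i).val * (y i).val : ℕ) : ZMod 2) := by
  push_cast
  exact Finset.sum_congr rfl fun i _ => by simp

lemma inner_zero_iff (x y : ι → ZMod 2) :
    ∑ i, x i * y i = 0 ↔ 2 ∣ ∑ i, (x i).val * (y i).val := by
  rw [inner_cast, ZMod.natCast_eq_zero_iff]

lemma self_orth {D : Submodule (ZMod 2) (ι → ZMod 2)}
    (hD : DoublyEven (D : Set (ι → ZMod 2))) :
    (D : Set (ι → ZMod 2)) ⊆ dual2 (D : Set (ι → ZMod 2)) := by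
  intro x hx y hy
  rw [inner_zero_iff]
  have h := hWt_add x y
  have h1 := hD x hx
  have h2 := hD y hy
  have h3 := hD _ (D.add_mem hx hy)
  omega

lemma exists_maximal (D0 : Submodule (ZMod 2) (ι → ZMod 2))
    (h0 : DoublyEven (D0 : Set (ι → ZMod 2))) :
    ∃ D : Submodule (ZMod 2) (ι → ZMod 2), D0 ≤ D ∧ DoublyEven (D : Set (ι → ZMod 2)) ∧
      ∀ v ∈ dual2 (D : Set (ι → ZMod 2)), 4 ∣ hWt v → v ∈ D := by
  classical
  have hfin : Set.Finite {D : Submodule (ZMod 2) (ι → ZMod 2) |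
      D0 ≤ D ∧ DoublyEven (D : Set (ι → ZMod 2))} := Set.toFinite _
  obtain ⟨D, hD⟩ := hfin.exists_maximal ⟨D0, le_refl _, h0⟩
  refine ⟨D, hD.prop.1, hD.prop.2, fun v hv h4 => ?_⟩
  have hmem : (D ⊔ Submodule.span (ZMod 2) {v}) ∈ {D : Submodule (ZMod 2) (ι → ZMod 2) |
      D0 ≤ D ∧ DoublyEven (D : Set (ι → ZMod 2))} := by
    refine ⟨hD.prop.1.trans le_sup_left, fun z hz => ?_⟩
    obtain ⟨x, hx, w, hw, rfl⟩ := Submodule.mem_sup.mp hz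
    obtain ⟨a, rfl⟩ := Submodule.mem_span_singleton.mp hw
    have h1 := hD.prop.2 x hx
    have ha : a = 0 ∨ a = 1 := by clear hz hw; revert a; decide
    rcases ha with rfl | rfl
    · simpa using h1
    · rw [one_smul]
      have h := hWt_add v x
      have h2 := (inner_zero_iff v x).mp (hv x hx)
      rw [add_comm x v]
      omega
  exact hD.le_of_ge hmem le_sup_left
    (Submodule.mem_sup_right (Submodule.mem_span_singleton_self v))

lemma one_add_I_pow (j : ℕ) : (1 + Complex.I) ^ (8 * j) = 16 ^ j := by
  rw [pow_mul]
  congr 1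
  have : (1 + Complex.I) ^ 2 = 2 * Complex.I := by
    ring_nf; rw [Complex.I_sq]; ring
  calc (1 + Complex.I) ^ 8 = ((1 + Complex.I) ^ 2) ^ 4 := by ring
    _ = 16 * Complex.I ^ 4 := by rw [this]; ring
    _ = 16 := by rw [Complex.I_pow_four]; ring

lemma exists_selfdual (j : ℕ) (hn : Fintype.card ι = 8 * j)
    (D0 : Submodule (ZMod 2) (ι → ZMod 2)) (h0 : DoublyEven (D0 : Set (ι → ZMod 2))) :
    ∃ D : Submodule (ZMod 2) (ι → ZMod 2), D0 ≤ D ∧ DoublyEven (D : Set (ι → ZMod 2)) ∧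
      SelfDual2 D := by
  classical
  obtain ⟨D, hle, hde, hmax⟩ := exists_maximal D0 h0
  refine ⟨D, hle, hde, ?_⟩
  have hso := self_orth hde
  have hone : (1 : ι → ZMod 2) ∈ D := by
    apply hmax
    · intro c hc
      rw [inner_zero_iff]
      have h1 := hde c hc
      rw [hWt_eq_sum] at h1
      simp only [Pi.one_apply]
      have : ∀ i, (1 : ZMod 2).val * (c i).val = (c i).val := by
        intro i; rw [ZMod.val_one, one_mul]
      simp_rw [this]
      omega
    · simp [hWt, hn]; omega
  have heven : ∀ v ∈ dual2 (D : Set (ι → ZMod 2)), 2 ∣ hWt v := by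
    intro v hv
    have h1 := (inner_zero_iff v 1).mp (hv 1 hone)
    rw [hWt_eq_sum]
    simpa [ZMod.val_one] using h1
  have hsub : fs (D : Set (ι → ZMod 2)) ⊆ fs (dual2 (D : Set (ι → ZMod 2))) := by
    intro x hx
    rw [mem_fs] at *
    exact hso hx
  have hm := macW (K := ℂ) D Complex.I
  have hcm := card_mul_card D
  have hI4 : ∀ c : ι → ZMod 2, 4 ∣ hWt c → Complex.I ^ hWt c = 1 := by
    rintro c ⟨e, he⟩
    rw [he, pow_mul, Complex.I_pow_four, one_pow]
  have hI2 : ∀ c : ι → ZMod 2, 2 ∣ hWt c → ¬ 4 ∣ hWt c → Complex.I ^ hWt c = -1 := by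
    rintro c h2 h4
    have : hWt c = 4 * (hWt c / 4) + 2 := by omega
    rw [this, pow_add, pow_mul, Complex.I_pow_four, one_pow, Complex.I_sq, one_mul]
  have hL : ∑ c ∈ fs (D : Set (ι → ZMod 2)),
      (1 + Complex.I) ^ (Fintype.card ι - hWt c) * (1 - Complex.I) ^ hWt c
      = ((fs (D : Set (ι → ZMod 2))).card : ℂ) * 16 ^ j := by
    rw [Finset.card_eq_sum_ones, Nat.cast_sum, Finset.sum_mul]
    refine Finset.sum_congr rfl fun c hc => ?_
    rw [mem_fs] at hc
    obtain ⟨e, he⟩ := hde c hc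
    have h1 : (1 - Complex.I) ^ hWt c = (1 + Complex.I) ^ hWt c := by
      have : (1 - Complex.I) ^ 4 = (1 + Complex.I) ^ 4 := by
        have h3 : (1 - Complex.I) ^ 4 - (1 + Complex.I) ^ 4
            = - 8 * Complex.I * (1 + Complex.I ^ 2) := by ring
        rw [Complex.I_sq] at h3
        rw [← sub_eq_zero, h3]; ring
      rw [he, pow_mul, pow_mul, this]
    rw [h1, ← pow_add, Nat.sub_add_cancel (hWt_le c), hn, one_add_I_pow]
    simp
  have hR : ∑ v ∈ fs (dual2 (D : Set (ι → ZMod 2))), Complex.I ^ hWt v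
      = 2 * ((fs (D : Set (ι → ZMod 2))).card : ℂ)
        - ((fs (dual2 (D : Set (ι → ZMod 2)))).card : ℂ) := by
    have h1 : ∑ v ∈ fs (dual2 (D : Set (ι → ZMod 2))), (Complex.I ^ hWt v + 1)
        = ∑ v ∈ fs (D : Set (ι → ZMod 2)), 2 := by
      rw [← Finset.sum_subset hsub]
      · refine Finset.sum_congr rfl fun c hc => ?_
        rw [mem_fs] at hc
        rw [hI4 c (hde c hc)]; norm_num
      · intro c hc hc'
        rw [mem_fs] at hc hc'
        rw [hI2 c (heven c hc) (fun h => hc' (hmax c hc h))]; ring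
    rw [Finset.sum_add_distrib] at h1
    simp only [Finset.sum_const, nsmul_eq_mul, mul_one] at h1
    rw [← sub_eq_iff_eq_add.mpr h1.symm]
    ring
  rw [hL, hR] at hm
  have hpos : 0 < (fs (D : Set (ι → ZMod 2))).card :=
    Finset.card_pos.mpr ⟨0, (mem_fs _ _).mpr D.zero_mem⟩
  have hne : ((fs (D : Set (ι → ZMod 2))).card : ℂ) ≠ 0 := by exact_mod_cast hpos.ne'
  have hm2 := mul_left_cancel₀ hne hm
  have hcard := Finset.card_le_card hsub
  have hfin : (fs (dual2 (D : Set (ι → ZMod 2)))).card ≤ (fs (D : Set (ι → ZMod 2))).card := by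
    generalize (fs (D : Set (ι → ZMod 2))).card = a at *
    generalize (fs (dual2 (D : Set (ι → ZMod 2)))).card = b at *
    have hm3 : (16 : ℤ) ^ j = 2 * a - b := by exact_mod_cast hm2
    have hcm2 : (a : ℤ) * b = (16 ^ j) ^ 2 := by
      have : (2 : ℕ) ^ (8 * j) = (16 ^ j) ^ 2 := by
        rw [← pow_mul, mul_comm j 2, pow_mul, pow_mul]; norm_num
      rw [hn, this] at hcm
      exact_mod_cast hcm
    rw [hm3] at hcm2
    have h16 : (0 : ℤ) < 16 ^ j := by positivity
    rw [hm3] at h16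
    have hz : ((a : ℤ) - b) * (4 * a - b) = 0 := by nlinarith
    rcases mul_eq_zero.mp hz with h | h <;> omega
  have heq := Finset.eq_of_subset_of_card_le hsub hfin
  unfold SelfDual2
  ext x
  rw [← mem_fs (D : Set (ι → ZMod 2)), heq, mem_fs]

end Ext

section Gleason

open Polynomial

/-- `1 + 14 x + x^2`. -/
noncomputable def pf : ℝ[X] := 1 + 14 * X + X ^ 2

/-- `x (1 - x)^4`. -/
noncomputable def pg : ℝ[X] := X * (X - 1) ^ 4

/-- Invariance under the MacWilliams transform (with `x = y^4`). -/
def Inv (j : ℕ) (Q : ℝ[X]) : Prop :=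
  ∀ y : ℝ, 1 < y → (1 + y) ^ (8 * j) * Q.eval (((1 - y) / (1 + y)) ^ 4) = 16 ^ j * Q.eval (y ^ 4)

lemma poly_eq {P R : ℝ[X]} (h : ∀ y : ℝ, 1 < y → P.eval y = R.eval y) : P = R :=
  Polynomial.eq_of_infinite_eval_eq P R ((Set.Ioi_infinite (1 : ℝ)).mono fun y hy => h y hy)

lemma inv_pf (j : ℕ) : Inv j (pf ^ j) := by
  intro y hy
  have h0 : (1 + y) ≠ 0 := by linarith
  rw [pow_mul, eval_pow, eval_pow, ← mul_pow, ← mul_pow]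
  congr 1
  simp only [pf, eval_add, eval_one, eval_mul, eval_X, eval_pow, eval_ofNat]
  field_simp
  ring

lemma inv_pg {j : ℕ} {R : ℝ[X]} (h : Inv (j + 3) (pg * R)) : Inv j R := by
  intro y hy
  have h0 : (1 + y) ≠ 0 := by linarith
  have h1 := h y hy
  have h2 : (1 + y) ^ 24 * pg.eval (((1 - y) / (1 + y)) ^ 4) = 16 ^ 3 * pg.eval (y ^ 4) := by
    simp only [pg, eval_sub, eval_one, eval_mul, eval_X, eval_pow]
    field_simp
    ring
  have h3 : (16 : ℝ) ^ 3 * pg.eval (y ^ 4) ≠ 0 := by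
    simp only [pg, eval_sub, eval_one, eval_mul, eval_X, eval_pow]
    have h4 : 1 < y ^ 4 := one_lt_pow₀ hy (by norm_num)
    have : y ^ 4 - 1 ≠ 0 := by linarith
    have : y ≠ 0 := by linarith
    positivity
  rw [eval_mul, eval_mul] at h1
  apply mul_left_cancel₀ h3
  calc _ = ((1 + y) ^ 24 * pg.eval (((1 - y) / (1 + y)) ^ 4)) *
        ((1 + y) ^ (8 * j) * R.eval (((1 - y) / (1 + y)) ^ 4)) := by rw [h2]
    _ = (1 + y) ^ (8 * (j + 3)) * (eval (((1 - y) / (1 + y)) ^ 4) pg *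
        eval (((1 - y) / (1 + y)) ^ 4) R) := by ring
    _ = _ := by rw [h1]; ring

/-- The transformed polynomial with denominators cleared. -/
noncomputable def SS (Q : ℝ[X]) : ℝ[X] :=
  ∑ i ∈ Finset.range (Q.natDegree + 1),
    C (Q.coeff i) * ((1 - X) ^ (4 * i) * (1 + X) ^ (4 * (Q.natDegree - i)))

lemma SS_eq {j : ℕ} {Q : ℝ[X]} (h : Inv j Q) :
    (1 + X) ^ (8 * j) * SS Q = (1 + X) ^ (4 * Q.natDegree) * (C (16 ^ j) * expand ℝ 4 Q) := by
  apply poly_eq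
  intro y hy
  have h0 : (1 + y) ≠ 0 := by linarith
  simp only [eval_mul, eval_pow, eval_add, eval_one, eval_X, eval_C, expand_eval]
  rw [← h y hy]
  have : (SS Q).eval y = (1 + y) ^ (4 * Q.natDegree) * Q.eval (((1 - y) / (1 + y)) ^ 4) := by
    rw [eval_eq_sum_range (p := Q), SS, eval_finsetSum, Finset.mul_sum]
    refine Finset.sum_congr rfl fun i hi => ?_
    have hi' : i ≤ Q.natDegree := by
      have := Finset.mem_range.mp hi
      omega
    obtain ⟨e, he⟩ := Nat.exists_eq_add_of_le hi'
    rw [he]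
    simp only [eval_mul, eval_pow, eval_add, eval_one, eval_X, eval_C, eval_sub]
    rw [Nat.add_sub_cancel_left, ← pow_mul, div_pow]
    field_simp
    ring
  rw [this]; ring

lemma one_add_X_ne : (1 + X : ℝ[X]) ≠ 0 := by
  intro h
  have := congrArg (eval 0) h
  simp at this

lemma inv_deg {j : ℕ} {Q : ℝ[X]} (h : Inv j Q) (hQ : Q ≠ 0) : Q.natDegree ≤ 2 * j := by
  by_contra hlt
  push Not at hlt
  have h1 := SS_eq h
  have h2 : 4 * Q.natDegree = 8 * j + (4 * Q.natDegree - 8 * j) := by omega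
  rw [h2, pow_add, mul_assoc] at h1
  have h3 := mul_left_cancel₀ (pow_ne_zero _ one_add_X_ne) h1
  have h4 := congrArg (eval (-1)) h3
  have h5 : 4 * Q.natDegree - 8 * j ≠ 0 := by omega
  simp only [eval_mul, eval_pow, eval_add, eval_one, eval_X, eval_C] at h4
  rw [add_neg_cancel, zero_pow h5, zero_mul, SS, eval_finsetSum,
    Finset.sum_eq_single Q.natDegree] at h4
  · simp [hQ] at h4
  · intro i hi hne
    have hi' : Q.natDegree - i ≠ 0 := by
      have := Finset.mem_range.mp hi
      omega
    simp [hi']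
  · simp

lemma dvd_of_expand_dvd {Q : ℝ[X]} (h : (X - C 1) ^ 4 ∣ expand ℝ 4 Q) : (X - C 1) ^ 4 ∣ Q := by
  by_cases hQ : Q = 0
  · simp [hQ]
  obtain ⟨R, hR, hnd⟩ := Q.exists_eq_pow_rootMultiplicity_mul_and_not_dvd hQ 1
  generalize Q.rootMultiplicity 1 = e at hR
  by_cases he : 4 ≤ e
  · rw [hR]
    exact (pow_dvd_pow _ he).mul_right _
  exfalso
  push Not at he
  rw [hR] at h
  have h1 : expand ℝ 4 ((X - C 1) ^ e * R)
      = (X - C 1) ^ e * ((1 + X + X ^ 2 + X ^ 3) ^ e * expand ℝ 4 R) := by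
    rw [map_mul, map_pow, ← mul_assoc, ← mul_pow]
    congr 2
    simp
    ring
  have h2 : (4 : ℕ) = e + (1 + (3 - e)) := by omega
  rw [h1] at h
  nth_rw 1 [h2] at h
  rw [pow_add] at h
  have h3 := (mul_dvd_mul_iff_left (pow_ne_zero e (X_sub_C_ne_zero (1 : ℝ)))).mp h
  rw [pow_add, pow_one] at h3
  have h4 := dvd_trans (dvd_mul_right _ _) h3
  rw [dvd_iff_isRoot] at h4 hnd
  apply hnd
  simp [IsRoot, expand_eval] at h4 ⊢
  rcases h4 with h4 | h4
  · norm_num at h4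
  · exact h4

lemma pg_dvd {j : ℕ} {Q : ℝ[X]} (h : Inv j Q) (h0 : Q.coeff 0 = 0) : pg ∣ Q := by
  have h1 := SS_eq h
  have h2 : (X - C 1) ^ 4 ∣ SS Q := by
    refine Finset.dvd_sum fun i _ => ?_
    rcases Nat.eq_zero_or_pos i with rfl | hi
    · simp [h0]
    · refine Dvd.dvd.mul_left (Dvd.dvd.mul_right ?_ _) _
      have : (1 - X : ℝ[X]) ^ (4 * i) = (X - C 1) ^ (4 * i) := by
        rw [← neg_sub, neg_pow, pow_mul (-1 : ℝ[X])]
        norm_num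
      rw [this]
      exact pow_dvd_pow _ (by omega)
  have h3 := h2.mul_left ((1 + X) ^ (8 * j))
  rw [h1] at h3
  have hco : IsCoprime (X - C 1 : ℝ[X]) (1 + X) := by
    refine ⟨-C (1/2), C (1/2), ?_⟩
    have : (C (1/2) : ℝ[X]) * 2 = 1 := by
      have : (2 : ℝ[X]) = C 2 := rfl
      rw [this, ← C_mul]; norm_num
    rw [C_1]
    linear_combination this
  have h4 := (hco.pow (m := 4) (n := 4 * Q.natDegree)).dvd_of_dvd_mul_left h3
  have hu : IsUnit (C (16 ^ j) : ℝ[X]) := isUnit_C.mpr (by simp)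
  have h5 := dvd_of_expand_dvd ((hu.dvd_mul_left).mp h4)
  have h6 : (X : ℝ[X]) ∣ Q := X_dvd_iff.mpr h0
  have hco2 : IsCoprime (X : ℝ[X]) (X - C 1) := ⟨1, -1, by rw [C_1]; ring⟩
  have := (hco2.pow_right (n := 4)).mul_dvd h6 h5
  simpa [pg] using this

lemma pg_monic : pg.Monic := by
  have : pg = X * (X - C 1) ^ 4 := by simp [pg]
  rw [this]
  exact monic_X.mul ((monic_X_sub_C 1).pow 4)

lemma pg_deg : pg.natDegree = 5 := by
  have : pg = X * (X - C 1) ^ 4 := by simp [pg]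
  rw [this, (monic_X).natDegree_mul ((monic_X_sub_C 1).pow 4), natDegree_X, natDegree_pow,
    natDegree_X_sub_C]

lemma gleason (j : ℕ) : ∀ Q : ℝ[X], Inv j Q →
    Q ∈ Submodule.span ℝ {P : ℝ[X] | ∃ r, 3 * r ≤ j ∧ P = pf ^ (j - 3 * r) * pg ^ r} := by
  induction j using Nat.strong_induction_on with
  | _ j ih =>
    intro Q hQ
    set M := Submodule.span ℝ {P : ℝ[X] | ∃ r, 3 * r ≤ j ∧ P = pf ^ (j - 3 * r) * pg ^ r} with hM
    have hf : pf ^ j ∈ M := Submodule.subset_span ⟨0, by simp, by simp⟩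
    set Q1 := Q - (Q.coeff 0) • pf ^ j with hQ1
    have hi : Inv j Q1 := by
      intro y hy
      have h1 := hQ y hy
      have h2 := inv_pf j y hy
      rw [hQ1, eval_sub, eval_sub, eval_smul, eval_smul, smul_eq_mul, smul_eq_mul]
      linear_combination h1 - Q.coeff 0 * h2
    have h0 : Q1.coeff 0 = 0 := by
      rw [coeff_zero_eq_eval_zero, hQ1, eval_sub, eval_smul, eval_pow, coeff_zero_eq_eval_zero]
      simp [pf]
    have key : Q1 ∈ M := by
      by_cases hz : Q1 = 0
      · rw [hz]; exact M.zero_mem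
      obtain ⟨R, hR⟩ := pg_dvd hi h0
      have hR0 : R ≠ 0 := by rintro rfl; simp at hR; exact hz hR
      have hd := inv_deg hi hz
      have hd2 : Q1.natDegree = 5 + R.natDegree := by
        rw [hR, pg_monic.natDegree_mul' hR0, pg_deg]
      obtain ⟨i, rfl⟩ : ∃ i, j = i + 3 := ⟨j - 3, by omega⟩
      rw [hR] at hi
      have hRm := ih i (by omega) R (inv_pg hi)
      rw [hR]
      have hle : Submodule.span ℝ {P : ℝ[X] | ∃ r, 3 * r ≤ i ∧ P = pf ^ (i - 3 * r) * pg ^ r}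
          ≤ M.comap (LinearMap.mulLeft ℝ pg) := by
        rw [Submodule.span_le]
        rintro P ⟨r, hr, rfl⟩
        refine Submodule.subset_span ⟨r + 1, by omega, ?_⟩
        have : i + 3 - 3 * (r + 1) = i - 3 * r := by omega
        rw [this, LinearMap.mulLeft_apply]; ring
      exact hle hRm
    have : Q = Q1 + (Q.coeff 0) • pf ^ j := by rw [hQ1]; ring
    rw [this]
    exact M.add_mem key (M.smul_mem _ hf)

end Gleason

section Lagrange

open PowerSeries

lemma ring_key {A : Type*} [CommRing A] (F F1 T Y : A) (hT : T * (1 - Y) = 1) (a b : ℕ) :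
    let G := Y * (Y - 1) ^ 4
    let G1 := (Y - 1) ^ 4 + Y * (4 * (Y - 1) ^ 3)
    ((a : A) + 1) * ((((3 * a + 1) * F ^ (3 * a) * F1 * G ^ (b + 1)
        + F ^ (3 * a + 1) * ((b + 1) * G ^ b * G1)) * F
      - (3 * (a + b + 1) + 1) * (F ^ (3 * a + 1) * G ^ (b + 1)) * F1) * F
        * T ^ (4 * (a + b + 1 + 1)))
    = - ((b : A) + 1) * (Y ^ b * (Y * ((3 * (a + 1)) * F ^ (3 * a + 2) * F1 * T ^ (4 * (a + 1))
        + F ^ (3 * (a + 1)) * ((4 * (a + 1)) * T ^ (4 * a + 3) * T ^ 2))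
        - (a + 1) * (F ^ (3 * (a + 1)) * T ^ (4 * (a + 1))))) := by
  intro G G1
  set B := (5 * Y - 1) * F - 3 * F1 * Y * (Y - 1) with hB
  have h1 : (Y - 1) ^ (4 * b + 3) * T ^ (4 * b + 3) = -1 := by
    rw [← mul_pow]
    have : (Y - 1) * T = -1 := by linear_combination -hT
    rw [this]
    exact Odd.neg_one_pow ⟨2 * b + 1, by ring⟩
  have hL : (((3 * a + 1) * F ^ (3 * a) * F1 * G ^ (b + 1)
        + F ^ (3 * a + 1) * ((b + 1) * G ^ b * G1)) * F
      - (3 * (a + b + 1) + 1) * (F ^ (3 * a + 1) * G ^ (b + 1)) * F1) * F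
        * T ^ (4 * (a + b + 1 + 1))
      = - ((b : A) + 1) * (Y ^ b * F ^ (3 * a + 2) * T ^ (4 * a + 5) * B) := by
    have : (((3 * a + 1) * F ^ (3 * a) * F1 * G ^ (b + 1)
        + F ^ (3 * a + 1) * ((b + 1) * G ^ b * G1)) * F
      - (3 * (a + b + 1) + 1) * (F ^ (3 * a + 1) * G ^ (b + 1)) * F1) * F
        * T ^ (4 * (a + b + 1 + 1))
        = ((b : A) + 1) * (Y ^ b * F ^ (3 * a + 2) * T ^ (4 * a + 5) * B) *
          ((Y - 1) ^ (4 * b + 3) * T ^ (4 * b + 3)) := by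
      have hG : G ^ b = Y ^ b * (Y - 1) ^ (4 * b) := by
        simp only [G]; rw [mul_pow, ← pow_mul]
      rw [pow_succ G, hG]
      simp only [G, G1, hB]
      generalize hZ : Y - 1 = Z
      have hY : Y = Z + 1 := by rw [← hZ]; ring
      have e1 : T ^ (4 * (a + b + 1 + 1)) = T ^ (4 * a + 5) * T ^ (4 * b + 3) := by
        rw [← pow_add]; congr 1; ring
      rw [e1]
      generalize T ^ (4 * a + 5) = t1
      generalize T ^ (4 * b + 3) = t2
      generalize hyb : Y ^ b = yb
      rw [pow_add Z, pow_add F (3 * a) 1, pow_add F (3 * a) 2]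
      generalize F ^ (3 * a) = fa
      generalize Z ^ (4 * b) = zb
      subst hY
      ring
    rw [this, h1]; ring
  rw [hL]
  have hR : (Y * ((3 * (a + 1)) * F ^ (3 * a + 2) * F1 * T ^ (4 * (a + 1))
        + F ^ (3 * (a + 1)) * ((4 * (a + 1)) * T ^ (4 * a + 3) * T ^ 2))
        - (a + 1) * (F ^ (3 * (a + 1)) * T ^ (4 * (a + 1))))
      = ((a : A) + 1) * (F ^ (3 * a + 2) * T ^ (4 * a + 5) * B) := by
    have e2 : T ^ (4 * (a + 1)) = T ^ (4 * a + 5) * (1 - Y) := by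
      rw [pow_succ T (4 * a + 4), mul_assoc, hT, mul_one]; congr 1
    have e3 : T ^ (4 * a + 3) * T ^ 2 = T ^ (4 * a + 5) := by rw [← pow_add]
    have e4 : F ^ (3 * (a + 1)) = F ^ (3 * a + 2) * F := by rw [← pow_succ]; congr 1
    rw [mul_assoc (4 * ((a : A) + 1)), e3, e2, e4, hB]
    ring
  rw [hR]; ring

/-- The geometric series. -/
noncomputable def TT : ℝ⟦X⟧ := PowerSeries.mk 1

lemma TT_mul : TT * (1 - X) = 1 := mk_one_mul_one_sub_eq_one ℝ

lemma TT_der : d⁄dX ℝ TT = TT ^ 2 := by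
  have h := congrArg (d⁄dX ℝ) TT_mul
  rw [Derivation.leibniz, map_sub, derivative_X, derivative_one] at h
  simp only [smul_eq_mul] at h
  have h2 := TT_mul
  calc d⁄dX ℝ TT = (TT * (1 - X)) * d⁄dX ℝ TT := by rw [h2, one_mul]
    _ = TT ^ 2 := by linear_combination TT * h

/-- The functional annihilating all invariant polynomials. -/
noncomputable def LL (m : ℕ) (Q : Polynomial ℝ) : ℝ :=
  coeff m (((Polynomial.derivative Q : Polynomial ℝ) * (pf : ℝ⟦X⟧)
    - (3 * m + 1) * (Q : ℝ⟦X⟧) * (Polynomial.derivative pf : Polynomial ℝ)) * (pf : ℝ⟦X⟧)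
      * TT ^ (4 * (m + 1)))

lemma LL_basis (m r : ℕ) (hr : 3 * r ≤ 3 * m + 1) :
    LL m (pf ^ (3 * m + 1 - 3 * r) * pg ^ r) = 0 := by
  unfold LL
  rcases r with _ | b
  · have : (((Polynomial.derivative (pf ^ (3 * m + 1 - 3 * 0) * pg ^ 0) : Polynomial ℝ) : ℝ⟦X⟧)
        * (pf : ℝ⟦X⟧) - (3 * m + 1) * ((pf ^ (3 * m + 1 - 3 * 0) * pg ^ 0 : Polynomial ℝ) : ℝ⟦X⟧)
          * (Polynomial.derivative pf : Polynomial ℝ)) = 0 := by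
      simp only [mul_zero, Nat.sub_zero, pow_zero, mul_one, Polynomial.derivative_pow,
        Nat.add_sub_cancel]
      push_cast
      have c3 : (C (3 : ℝ) : ℝ⟦X⟧) = 3 := rfl
      simp [c3]
      ring
    rw [this]; simp
  · obtain ⟨a, rfl⟩ : ∃ a, m = a + b + 1 := ⟨m - b - 1, by omega⟩
    have he : 3 * (a + b + 1) + 1 - 3 * (b + 1) = 3 * a + 1 := by omega
    rw [he]
    have key := ring_key (pf : ℝ⟦X⟧) (Polynomial.derivative pf : Polynomial ℝ) TT X TT_mul a b
    simp only at key
    have hQ' : ((Polynomial.derivative (pf ^ (3 * a + 1) * pg ^ (b + 1)) : Polynomial ℝ) : ℝ⟦X⟧)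
        = ((3 * (a : ℝ⟦X⟧) + 1) * (pf : ℝ⟦X⟧) ^ (3 * a)
            * ((Polynomial.derivative pf : Polynomial ℝ) : ℝ⟦X⟧)
            * ((X : ℝ⟦X⟧) * (X - 1) ^ 4) ^ (b + 1)
          + (pf : ℝ⟦X⟧) ^ (3 * a + 1) * (((b : ℝ⟦X⟧) + 1) * ((X : ℝ⟦X⟧) * (X - 1) ^ 4) ^ b
            * (((X : ℝ⟦X⟧) - 1) ^ 4 + X * (4 * (X - 1) ^ 3)))) := by
      have hg : (pg : ℝ⟦X⟧) = (X : ℝ⟦X⟧) * (X - 1) ^ 4 := by simp [pg]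
      rw [← derivative_coe, ← derivative_coe, Polynomial.coe_mul, Polynomial.coe_pow,
        Polynomial.coe_pow, hg, Derivation.leibniz, PowerSeries.derivative_pow,
        PowerSeries.derivative_pow, Derivation.leibniz, PowerSeries.derivative_pow, map_sub,
        derivative_X, derivative_one]
      simp only [smul_eq_mul, Nat.add_sub_cancel]
      push_cast
      ring
    have hQ : ((pf ^ (3 * a + 1) * pg ^ (b + 1) : Polynomial ℝ) : ℝ⟦X⟧)
        = (pf : ℝ⟦X⟧) ^ (3 * a + 1) * (X * (X - 1) ^ 4) ^ (b + 1) := by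
      simp [pg]
    set U : ℝ⟦X⟧ := (pf : ℝ⟦X⟧) ^ (3 * (a + 1)) * TT ^ (4 * (a + 1)) with hU
    have hU' : d⁄dX ℝ U = ((3 * (a + 1)) * (pf : ℝ⟦X⟧) ^ (3 * a + 2)
          * (Polynomial.derivative pf : Polynomial ℝ) * TT ^ (4 * (a + 1))
        + (pf : ℝ⟦X⟧) ^ (3 * (a + 1)) * ((4 * (a + 1)) * TT ^ (4 * a + 3) * TT ^ 2)) := by
      rw [hU, Derivation.leibniz, PowerSeries.derivative_pow, PowerSeries.derivative_pow, TT_der,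
        derivative_coe]
      have e1 : 3 * (a + 1) - 1 = 3 * a + 2 := by omega
      have e2 : 4 * (a + 1) - 1 = 4 * a + 3 := by omega
      rw [e1, e2]
      simp only [smul_eq_mul]
      push_cast
      ring
    have hcast : ((a + b + 1 : ℕ) : ℝ⟦X⟧) = a + b + 1 := by push_cast; ring
    rw [hQ', hQ, hcast]
    rw [← hU'] at key
    have k2 := congrArg (coeff (a + b + 1)) key
    have c1 : ((a : ℝ⟦X⟧) + 1) = C ((a : ℝ) + 1) := by simp
    have c2 : -((b : ℝ⟦X⟧) + 1) = C (-((b : ℝ) + 1)) := by simp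
    rw [c1, c2, coeff_C_mul, coeff_C_mul] at k2
    have e3 : a + b + 1 = (a + 1) + b := by ring
    have k3 : coeff (a + b + 1) (X ^ b * (X * d⁄dX ℝ U - C ((a : ℝ) + 1) * U)) = 0 := by
      rw [e3, coeff_X_pow_mul, map_sub, coeff_succ_X_mul, coeff_C_mul, coeff_derivative]
      ring
    rw [k3, mul_zero] at k2
    have ha : (a : ℝ) + 1 ≠ 0 := by positivity
    exact (mul_eq_zero.mp k2).resolve_left ha

lemma LL_add (m : ℕ) (P Q : Polynomial ℝ) : LL m (P + Q) = LL m P + LL m Q := by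
  unfold LL
  rw [← map_add]
  congr 1
  simp only [Polynomial.derivative_add, Polynomial.coe_add]
  ring

lemma LL_smul (m : ℕ) (t : ℝ) (P : Polynomial ℝ) : LL m (t • P) = t * LL m P := by
  unfold LL
  rw [← coeff_C_mul]
  congr 1
  rw [Polynomial.smul_eq_C_mul, Polynomial.derivative_C_mul]
  simp only [Polynomial.coe_mul, Polynomial.coe_C]
  ring

lemma LL_inv (m : ℕ) (Q : Polynomial ℝ) (hQ : Inv (3 * m + 1) Q) : LL m Q = 0 := by
  have h := gleason _ Q hQ
  clear hQ
  induction h using Submodule.span_induction with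
  | mem P hP =>
    obtain ⟨r, hr, rfl⟩ := hP
    exact LL_basis m r hr
  | zero => simp [LL]
  | add P Q _ _ h1 h2 => rw [LL_add, h1, h2, add_zero]
  | smul t P _ h1 => rw [LL_smul, h1, mul_zero]

/-- All coefficients nonnegative. -/
def NN (p : ℝ⟦X⟧) : Prop := ∀ n, 0 ≤ coeff n p

lemma NN.add {p q : ℝ⟦X⟧} (hp : NN p) (hq : NN q) : NN (p + q) := fun n => by
  rw [map_add]; exact add_nonneg (hp n) (hq n)

lemma NN.mul {p q : ℝ⟦X⟧} (hp : NN p) (hq : NN q) : NN (p * q) := fun n => by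
  rw [coeff_mul]; exact Finset.sum_nonneg fun _ _ => mul_nonneg (hp _) (hq _)

lemma NN_X : NN X := fun n => by rw [coeff_X]; split_ifs <;> norm_num

lemma NN_C {t : ℝ} (ht : 0 ≤ t) : NN (C t) := fun n => by
  rw [coeff_C]; split_ifs <;> simp [ht]

lemma TT_coeff_pos (N n : ℕ) : 0 < coeff n (TT ^ (N + 1)) := by
  unfold TT
  rw [mk_one_pow_eq_mk_choose_add, coeff_mk]
  exact_mod_cast Nat.choose_pos (by omega)

lemma pos_coeff (m : ℕ) :
    0 < coeff m (((Polynomial.derivative pf : Polynomial ℝ) : ℝ⟦X⟧) * (pf : ℝ⟦X⟧)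
      * TT ^ (4 * (m + 1))) := by
  have h : ((Polynomial.derivative pf : Polynomial ℝ) : ℝ⟦X⟧) * (pf : ℝ⟦X⟧)
      * TT ^ (4 * (m + 1)) = C (14 : ℝ) * TT ^ (4 * m + 3 + 1)
        + (X * (C (198 : ℝ) + C (42 : ℝ) * X + C (2 : ℝ) * (X * X))) * TT ^ (4 * m + 3 + 1) := by
    have e : 4 * (m + 1) = 4 * m + 3 + 1 := by ring
    rw [e]
    have h14 : ((14 : Polynomial ℝ) : ℝ⟦X⟧) = 14 := by
      have : (14 : Polynomial ℝ) = Polynomial.C 14 := rfl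
      rw [this, Polynomial.coe_C]; rfl
    have h1 : (pf : ℝ⟦X⟧) = 1 + 14 * X + X ^ 2 := by simp [pf, h14]
    have h2 : ((Polynomial.derivative pf : Polynomial ℝ) : ℝ⟦X⟧) = 14 + 2 * X := by
      rw [← derivative_coe, h1]
      have h14 : (14 : ℝ⟦X⟧) = C 14 := rfl
      rw [map_add, map_add, h14, Derivation.leibniz, derivative_one, derivative_C,
        PowerSeries.derivative_pow]
      simp
    have c1 : (C (14 : ℝ) : ℝ⟦X⟧) = 14 := rfl
    have c2 : (C (198 : ℝ) : ℝ⟦X⟧) = 198 := rfl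
    have c3 : (C (42 : ℝ) : ℝ⟦X⟧) = 42 := rfl
    have c4 : (C (2 : ℝ) : ℝ⟦X⟧) = 2 := rfl
    rw [h1, h2, c1, c2, c3, c4]
    ring
  rw [h, map_add, coeff_C_mul]
  have hT : NN (TT ^ (4 * m + 3 + 1)) := fun n => (TT_coeff_pos _ n).le
  have h3 : NN ((X * (C (198 : ℝ) + C (42 : ℝ) * X + C (2 : ℝ) * (X * X)))
      * TT ^ (4 * m + 3 + 1)) := by
    refine NN.mul (NN.mul NN_X (NN.add (NN.add (NN_C ?_) (NN.mul (NN_C ?_) NN_X))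
      (NN.mul (NN_C ?_) (NN.mul NN_X NN_X)))) hT <;> norm_num
  have h4 := TT_coeff_pos (4 * m + 3) m
  have h5 := h3 m
  linarith

lemma no_gap (m : ℕ) (U : Polynomial ℝ) (hQ : Inv (3 * m + 1) (1 + Polynomial.X ^ (m + 2) * U)) :
    False := by
  have h := LL_inv m _ hQ
  unfold LL at h
  set F1 : ℝ⟦X⟧ := ((Polynomial.derivative pf : Polynomial ℝ) : ℝ⟦X⟧)
  set F : ℝ⟦X⟧ := (pf : ℝ⟦X⟧)
  set Q : Polynomial ℝ := 1 + Polynomial.X ^ (m + 2) * U with hQdef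
  have hQc : (Q : ℝ⟦X⟧) = 1 + X ^ (m + 2) * (U : ℝ⟦X⟧) := by simp [hQdef]
  have hQd : ((Polynomial.derivative Q : Polynomial ℝ) : ℝ⟦X⟧)
      = X ^ (m + 1) * (((m : ℝ⟦X⟧) + 2) * (U : ℝ⟦X⟧) + X * d⁄dX ℝ (U : ℝ⟦X⟧)) := by
    rw [← derivative_coe, hQc, map_add, derivative_one, Derivation.leibniz,
      PowerSeries.derivative_pow, derivative_X]
    have e : m + 2 - 1 = m + 1 := by omega
    rw [e]
    simp only [smul_eq_mul]
    push_cast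
    ring
  have h1 : ∃ Z : ℝ⟦X⟧, (((Polynomial.derivative Q : Polynomial ℝ) : ℝ⟦X⟧) * F
      - (3 * (m : ℝ⟦X⟧) + 1) * (Q : ℝ⟦X⟧) * F1) * F * TT ^ (4 * (m + 1))
      = X ^ (m + 1) * Z - C ((3 : ℝ) * m + 1) * (F1 * F * TT ^ (4 * (m + 1))) := by
    refine ⟨((((m : ℝ⟦X⟧) + 2) * (U : ℝ⟦X⟧) + X * d⁄dX ℝ (U : ℝ⟦X⟧)) * F
      - (3 * (m : ℝ⟦X⟧) + 1) * X * (U : ℝ⟦X⟧) * F1) * F * TT ^ (4 * (m + 1)), ?_⟩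
    have c : (C ((3 : ℝ) * m + 1) : ℝ⟦X⟧) = 3 * (m : ℝ⟦X⟧) + 1 := by
      rw [map_add, map_mul, map_natCast, map_one]; rfl
    rw [c, hQd, hQc]
    ring
  obtain ⟨Z, hZ⟩ := h1
  rw [hZ, map_sub, coeff_C_mul, coeff_X_pow_mul', if_neg (by omega)] at h
  have h2 := pos_coeff m
  have h3 : (0 : ℝ) < 3 * m + 1 := by positivity
  have := mul_pos h3 h2
  linarith

end Lagrange

section Final

variable {ι : Type*} [Fintype ι]

lemma hWt_ne_zero {c : ι → ZMod 2} (hc : c ≠ 0) : hWt c ≠ 0 := by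
  unfold hWt
  rw [Finset.card_ne_zero]
  obtain ⟨i, hi⟩ := Function.ne_iff.mp hc
  exact ⟨i, by simpa using hi⟩

/-- The Mallows-Sloane bound in length `24k+8`. -/
lemma mallows_sloane (k : ℕ) (hn : Fintype.card ι = 24 * k + 8)
    (D : Submodule (ZMod 2) (ι → ZMod 2)) (hsd : SelfDual2 D)
    (hde : DoublyEven (D : Set (ι → ZMod 2))) :
    ∃ c ∈ D, c ≠ 0 ∧ hWt c ≤ 4 * k + 4 := by
  classical
  by_contra hcon
  push Not at hcon
  have hdual : dual2 (D : Set (ι → ZMod 2)) = D := hsd.symm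
  have hn8 : Fintype.card ι = 8 * (3 * k + 1) := by omega
  have hcard : ((fs (D : Set (ι → ZMod 2))).card : ℝ) = 16 ^ (3 * k + 1) := by
    have h := card_mul_card D
    rw [hdual, hn8] at h
    have h2 : (2 : ℕ) ^ (8 * (3 * k + 1)) = 16 ^ (3 * k + 1) * 16 ^ (3 * k + 1) := by
      rw [← mul_pow, pow_mul]; norm_num
    rw [h2] at h
    exact_mod_cast Nat.mul_self_inj.mp h
  have hrest : ∀ c ∈ (fs (D : Set (ι → ZMod 2))).erase 0, hWt c / 4 = (k + 2) + (hWt c / 4 - (k + 2)) := by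
    intro c hc
    obtain ⟨h1, h2⟩ := Finset.mem_erase.mp hc
    rw [mem_fs] at h2
    have h3 := hcon c h2 h1
    have h4 := hde c h2
    omega
  apply no_gap k (∑ c ∈ (fs (D : Set (ι → ZMod 2))).erase 0,
    (Polynomial.X : Polynomial ℝ) ^ (hWt c / 4 - (k + 2)))
  have hQ : (1 + Polynomial.X ^ (k + 2) * ∑ c ∈ (fs (D : Set (ι → ZMod 2))).erase 0,
      (Polynomial.X : Polynomial ℝ) ^ (hWt c / 4 - (k + 2)))
      = ∑ c ∈ fs (D : Set (ι → ZMod 2)), (Polynomial.X : Polynomial ℝ) ^ (hWt c / 4) := by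
    rw [← Finset.add_sum_erase _ _ ((mem_fs (D : Set (ι → ZMod 2)) 0).mpr D.zero_mem),
      Finset.mul_sum]
    congr 1
    · simp [hWt]
    · refine Finset.sum_congr rfl fun c hc => ?_
      rw [← pow_add, ← hrest c hc]
  rw [hQ]
  intro y hy
  have h0 : (1 + y) ≠ 0 := by linarith
  have hev : ∀ z : ℝ, (∑ c ∈ fs (D : Set (ι → ZMod 2)),
      (Polynomial.X : Polynomial ℝ) ^ (hWt c / 4)).eval (z ^ 4)
      = ∑ c ∈ fs (D : Set (ι → ZMod 2)), z ^ hWt c := by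
    intro z
    rw [Polynomial.eval_finsetSum]
    refine Finset.sum_congr rfl fun c hc => ?_
    rw [mem_fs] at hc
    rw [Polynomial.eval_pow, Polynomial.eval_X, ← pow_mul, Nat.mul_div_cancel' (hde c hc)]
  rw [hev, hev]
  have hm := macW D y
  rw [hdual, hcard] at hm
  rw [← hm, Finset.mul_sum, hn8]
  refine Finset.sum_congr rfl fun c hc => ?_
  have hle := hWt_le c
  rw [hn8] at hle
  obtain ⟨e, he⟩ := Nat.exists_eq_add_of_le hle
  rw [he, Nat.add_sub_cancel_left, div_pow, pow_add]
  field_simp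

lemma res2_add (x y : ι → ZMod 4) : res2 (x + y) = res2 x + res2 y := by
  ext i; simp only [res2, Pi.add_apply, map_add]

/-- The residue code as a submodule. -/
def resSub (C : Submodule (ZMod 4) (ι → ZMod 4)) : Submodule (ZMod 2) (ι → ZMod 2) where
  carrier := residue (C : Set (ι → ZMod 4))
  add_mem' := by
    rintro _ _ ⟨x, hx, rfl⟩ ⟨y, hy, rfl⟩
    exact ⟨x + y, C.add_mem hx hy, res2_add x y⟩
  zero_mem' := ⟨0, C.zero_mem, by ext i; simp only [res2, Pi.zero_apply, map_zero]⟩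
  smul_mem' := by
    rintro a _ ⟨x, hx, rfl⟩
    have ha : a = 0 ∨ a = 1 := by revert a; decide
    rcases ha with rfl | rfl
    · exact ⟨0, C.zero_mem, by ext i; simp [res2]⟩
    · exact ⟨x, hx, by rw [one_smul]⟩

lemma res_doublyEven {C : Submodule (ZMod 4) (ι → ZMod 4)} (h : SelfDualZ4 C) :
    DoublyEven (resSub C : Set (ι → ZMod 2)) := by
  rintro _ ⟨x, hx, rfl⟩
  have hx' : x ∈ dualZ4 (C : Set (ι → ZMod 4)) := by
    rw [← h]; exact hx
  have h1 := hx' x hx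
  rw [← ZMod.natCast_eq_zero_iff, hWt_eq_sum, ← h1]
  push_cast
  refine Finset.sum_congr rfl fun i _ => ?_
  unfold res2
  generalize x i = a
  revert a; decide

/-- Twice a binary vector. -/
def dbl (v : ι → ZMod 2) : ι → ZMod 4 := fun i => 2 * ((v i).val : ZMod 4)

lemma leeWt_dbl (v : ι → ZMod 2) : leeWt (dbl v) = 2 * hWt v := by
  rw [hWt_eq_sum, leeWt, Finset.mul_sum]
  refine Finset.sum_congr rfl fun i _ => ?_
  unfold dbl
  generalize v i = a
  revert a; decide

lemma dbl_ne_zero {v : ι → ZMod 2} (hv : v ≠ 0) : dbl v ≠ 0 := by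
  obtain ⟨i, hi⟩ := Function.ne_iff.mp hv
  intro h
  have h1 := congrFun h i
  unfold dbl at h1
  simp only [Pi.zero_apply] at hi h1
  generalize v i = a at *
  clear h
  revert a; decide

lemma dbl_mem {C : Submodule (ZMod 4) (ι → ZMod 4)} (h : SelfDualZ4 C) {v : ι → ZMod 2}
    (hv : v ∈ dual2 (resSub C : Set (ι → ZMod 2))) : dbl v ∈ C := by
  have : dbl v ∈ dualZ4 (C : Set (ι → ZMod 4)) := by
    intro y hy
    have h1 := (inner_zero_iff v (res2 y)).mp (hv (res2 y) ⟨y, hy, rfl⟩)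
    obtain ⟨e, he⟩ := h1
    have h2 : ∑ i, dbl v i * y i = 2 * ((∑ i, (v i).val * (res2 y i).val : ℕ) : ZMod 4) := by
      push_cast
      rw [Finset.mul_sum]
      refine Finset.sum_congr rfl fun i _ => ?_
      unfold dbl res2
      generalize v i = a
      generalize y i = b
      revert a b; decide
    rw [h2, he]
    push_cast
    rw [← mul_assoc]
    have : (2 * 2 : ZMod 4) = 0 := by decide
    rw [this, zero_mul]
  rw [← h] at this
  exact this

end Final

end Z4Aux

open Z4Note in
/-- if there is no binary extremal doubly even self-dual code of length
`24k+8`, then no self-dual `ZMod 4`-code of length `24k+8` has minimum Lee weight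
`8k+6` or `8k+8`, and (with Rains's bound) its minimum Lee weight is at most `8k+4`. -/
theorem minLee_le_of_no_extremal_length24k8
    (k : ℕ) (hk : 0 < k)
    (hno : ¬ ∃ D : Submodule (ZMod 2) (Fin (24 * k + 8) → ZMod 2),
        SelfDual2 D ∧ DoublyEven (D : Set (Fin (24 * k + 8) → ZMod 2)) ∧
        minHam (D : Set (Fin (24 * k + 8) → ZMod 2)) = 4 * k + 4)
    (C : Submodule (ZMod 4) (Fin (24 * k + 8) → ZMod 4)) (hsd : SelfDualZ4 C) :
    (minLee (C : Set (Fin (24 * k + 8) → ZMod 4)) ≠ 8 * k + 6 ∧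
     minLee (C : Set (Fin (24 * k + 8) → ZMod 4)) ≠ 8 * k + 8) ∧
    minLee (C : Set (Fin (24 * k + 8) → ZMod 4)) ≤ 8 * k + 4 := by
  by_contra hcon0
  have hcon : 8 * k + 4 < minLee (C : Set (Fin (24 * k + 8) → ZMod 4)) := by
    by_contra hle
    exact hcon0 ⟨⟨by omega, by omega⟩, by omega⟩
  obtain ⟨D, hle, hde, hD⟩ := Z4Aux.exists_selfdual (3 * k + 1)
    (by rw [Fintype.card_fin]; ring) (Z4Aux.resSub C) (Z4Aux.res_doublyEven hsd)
  apply hno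
  have hlow : ∀ c ∈ D, c ≠ 0 → 4 * k + 4 ≤ hWt c := by
    intro c hc hc0
    have hcd : c ∈ dual2 (Z4Aux.resSub C : Set (Fin (24 * k + 8) → ZMod 2)) := by
      have h1 : c ∈ dual2 (D : Set (Fin (24 * k + 8) → ZMod 2)) := Z4Aux.self_orth hde hc
      exact fun y hy => h1 y (hle hy)
    have h2 : minLee (C : Set (Fin (24 * k + 8) → ZMod 4)) ≤ 2 * hWt c :=
      Nat.sInf_le ⟨Z4Aux.dbl c, Z4Aux.dbl_mem hsd hcd, Z4Aux.dbl_ne_zero hc0,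
        Z4Aux.leeWt_dbl c⟩
    have h3 := hde c hc
    omega
  refine ⟨D, hD, hde, ?_⟩
  obtain ⟨c, hc, hc0, hcw⟩ := Z4Aux.mallows_sloane k (Fintype.card_fin _) D hD hde
  have hceq : hWt c = 4 * k + 4 := le_antisymm hcw (hlow c hc hc0)
  apply le_antisymm
  · exact Nat.sInf_le ⟨c, hc, hc0, hceq⟩
  · refine le_csInf (s := {d | ∃ x ∈ (D : Set (Fin (24 * k + 8) → ZMod 2)), x ≠ 0 ∧ hWt x = d})
      ⟨_, c, hc, hc0, rfl⟩ ?_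
    rintro d ⟨x, hx, hx0, rfl⟩
    exact hlow x hx hx0
end

section
/- The three bordered double circulant Z4-codes of length 24 determined by (α,β,γ) = (0,1,1) and circulant first rows (1,3,1,0,3,3,0,3,2,2,2), (0,1,1,3,0,3,3,2,3,2,2) and (3,1,0,3,0,0,0,1,3,3,2) respectively are self-dual Type I Z4-codes of length 24 with minimum Lee weight 10, and they are pairwise inequivalent. In particular, there are at least three inequivalent bordered double circulant Type I Z4-codes of length 24 and minimum Lee weight 10. -/
open Finset

/-! ### Packing digit vectors into natural numbers (base 64) -/

namespace Z4Pack

def pack : {n : ℕ} → (Fin n → ℕ) → ℕ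
  | 0, _ => 0
  | _ + 1, a => a 0 + 64 * pack (fun i => a i.succ)

theorem land_step (a b x y : ℕ) (ha : a < 64) (hb : b < 64) :
    Nat.land (a + 64 * x) (b + 64 * y) = Nat.land a b + 64 * Nat.land x y := by
  change (a + 64 * x) &&& (b + 64 * y) = (a &&& b) + 64 * (x &&& y)
  have h1 := Nat.and_mod_two_pow (a := a + 64 * x) (b := b + 64 * y) (n := 6)
  have h2 := Nat.and_div_two_pow (a := a + 64 * x) (b := b + 64 * y) (n := 6)
  have e1 : (a + 64 * x) % 2 ^ 6 = a := by omega
  have e2 : (b + 64 * y) % 2 ^ 6 = b := by omega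
  have e3 : (a + 64 * x) / 2 ^ 6 = x := by omega
  have e4 : (b + 64 * y) / 2 ^ 6 = y := by omega
  rw [e1, e2] at h1
  rw [e3, e4] at h2
  rw [← h1, ← h2]
  omega

theorem pack_land {n : ℕ} (a b : Fin n → ℕ) (ha : ∀ i, a i < 64) (hb : ∀ i, b i < 64) :
    Nat.land (pack a) (pack b) = pack (fun i => Nat.land (a i) (b i)) := by
  induction n with
  | zero => simp only [pack]; decide
  | succ n ih =>
    simp only [pack]
    rw [land_step _ _ _ _ (ha 0) (hb 0), ih _ _ (fun i => ha _) (fun i => hb _)]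

theorem pack_add {n : ℕ} (a b : Fin n → ℕ) :
    pack a + pack b = pack (fun i => a i + b i) := by
  induction n with
  | zero => rfl
  | succ n ih =>
    simp only [pack]
    rw [← ih]; ring

theorem pack_mul {n : ℕ} (k : ℕ) (a : Fin n → ℕ) :
    k * pack a = pack (fun i => k * a i) := by
  induction n with
  | zero => rfl
  | succ n ih =>
    simp only [pack]
    rw [← ih]; ring

theorem pack_sub {n : ℕ} (a b : Fin n → ℕ) (h : ∀ i, b i ≤ a i) :
    pack a - pack b = pack (fun i => a i - b i) := by
  have : pack (fun i => a i - b i) + pack b = pack a := by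
    rw [pack_add]; congr 1; funext i; have := h i; omega
  omega

theorem pack_mod {n : ℕ} (a : Fin n → ℕ) : pack a % 63 = (∑ i, a i) % 63 := by
  induction n with
  | zero => rfl
  | succ n ih =>
    simp only [pack, Fin.sum_univ_succ]
    have := ih (fun i => a i.succ)
    omega

theorem pack_inj {n : ℕ} (a b : Fin n → ℕ) (ha : ∀ i, a i < 64) (hb : ∀ i, b i < 64)
    (h : pack a = pack b) : ∀ i, a i = b i := by
  induction n with
  | zero => exact fun i => i.elim0
  | succ n ih =>
    simp only [pack] at h
    have h0 := ha 0
    have h1 := hb 0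
    have := ih (fun i => a i.succ) (fun i => b i.succ) (fun i => ha _) (fun i => hb _) (by omega)
    intro i
    refine Fin.cases (by omega) this i

theorem pack_single {n : ℕ} (p : Fin n) (k : ℕ) :
    pack (fun i => if i = p then k else 0) = k * 64 ^ (p : ℕ) := by
  induction n with
  | zero => exact p.elim0
  | succ n ih =>
    have hz : ∀ m : ℕ, pack (fun _ : Fin m => 0) = 0 := by
      intro m
      induction m with
      | zero => rfl
      | succ m ihm => simp only [pack]; rw [ihm]
    refine Fin.cases ?_ (fun q => ?_) p
    · simp only [pack]
      have : ∀ i : Fin n, (if i.succ = (0 : Fin (n + 1)) then k else 0) = 0 := by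
        intro i; rw [if_neg (Fin.succ_ne_zero i)]
      simp only [this, hz]; simp
    · simp only [pack, Fin.succ_inj]
      rw [ih q, if_neg (Fin.succ_ne_zero q).symm]
      simp only [Fin.val_succ, pow_succ]; ring

/-! ### Codewords as packed numbers -/

open Z4Note

abbrev V := (Fin 12 ⊕ Fin 12) → ZMod 4

def ix : Fin 24 ≃ Fin 12 ⊕ Fin 12 := (finSumFinEquiv (m := 12) (n := 12)).symm

def enc (f : V) : ℕ := pack (fun i => (f (ix i)).val)

theorem dig_lt (f : V) (i : Fin 24) : (f (ix i)).val < 64 :=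
  lt_trans (ZMod.val_lt _) (by norm_num)

def maskM : ℕ := 1061940247549077292454081822507064833618115
def maskL : ℕ := 353980082516359097484693940835688277872705

theorem maskM_eq : maskM = pack (fun _ : Fin 24 => 3) := by decide +kernel
theorem maskL_eq : maskL = pack (fun _ : Fin 24 => 1) := by decide +kernel

theorem enc_inj {f g : V} (h : enc f = enc g) : f = g := by
  have := pack_inj _ _ (dig_lt f) (dig_lt g) h
  funext j
  have h2 := this (ix.symm j)
  simp only [Equiv.apply_symm_apply] at h2
  exact ZMod.val_injective 4 h2

theorem enc_add (f g : V) (k : Fin 4) :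
    Nat.land (Nat.add (enc f) (Nat.mul k.val (enc g))) 1061940247549077292454081822507064833618115 = enc (f + (k.val : ZMod 4) • g) := by
  change Nat.land (enc f + k.val * enc g) maskM = _
  rw [maskM_eq, enc, enc, pack_mul, pack_add, pack_land]
  · unfold enc
    congr 1
    funext i
    simp only [Pi.add_apply, Pi.smul_apply, smul_eq_mul]
    generalize f (ix i) = a
    generalize g (ix i) = b
    revert a b k
    decide
  · intro i
    have h1 := ZMod.val_lt (f (ix i))
    have h2 := ZMod.val_lt (g (ix i))
    have h3 : k.val ≤ 3 := by omega
    have : k.val * (g (ix i)).val ≤ 3 * 3 := Nat.mul_le_mul h3 (by omega)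
    omega
  · intro i; norm_num

def leeN (s : ℕ) : ℕ :=
  Nat.mod (Nat.sub s (Nat.land (Nat.mul 2 (Nat.land s 353980082516359097484693940835688277872705)) s)) 63

theorem leeN_enc (f : V) : leeN (enc f) = leeWt f := by
  change (enc f - Nat.land (2 * Nat.land (enc f) maskL) (enc f)) % 63 = _
  have hl : ∀ i, Nat.land (f (ix i)).val 1 < 32 := by
    intro i; generalize f (ix i) = a; revert a; decide
  rw [maskL_eq, enc, pack_land _ _ (dig_lt f) (by intro i; norm_num), pack_mul,
    pack_land _ _ (by intro i; have := hl i; omega) (dig_lt f), pack_sub, pack_mod]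
  · have : ∀ i, (f (ix i)).val - Nat.land (2 * Nat.land (f (ix i)).val 1) (f (ix i)).val
        = leeVal (f (ix i)) := by
      intro i; generalize f (ix i) = a; revert a; decide
    simp only [this]
    rw [Equiv.sum_comp ix (fun j => leeVal (f j))]
    apply Nat.mod_eq_of_lt
    have h2 : ∀ a : ZMod 4, leeVal a ≤ 2 := by decide
    calc ∑ j, leeVal (f j) ≤ ∑ _j : Fin 12 ⊕ Fin 12, 2 := Finset.sum_le_sum (fun j _ => h2 _)
      _ < 63 := by simp
  · intro i; generalize f (ix i) = a; revert a; decide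

/-- No coordinate is odd in both vectors. -/
def Disj (x y : V) : Prop := ∀ i, 2 * x i * y i = 0

def disjN (x y : ℕ) : Bool := Nat.beq (Nat.land (Nat.land x y) 353980082516359097484693940835688277872705) 0

theorem disjN_enc (x y : V) : disjN (enc x) (enc y) = true ↔ Disj x y := by
  have hl : ∀ i, Nat.land (x (ix i)).val (y (ix i)).val < 64 := by
    intro i; generalize x (ix i) = a; generalize y (ix i) = b; revert a b; decide
  have hl2 : ∀ i, Nat.land (Nat.land (x (ix i)).val (y (ix i)).val) 1 < 64 := by
    intro i; generalize x (ix i) = a; generalize y (ix i) = b; revert a b; decide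
  have h0 : (0 : ℕ) = pack (fun _ : Fin 24 => 0) := by decide +kernel
  have key : ∀ a b : ZMod 4, Nat.land (Nat.land a.val b.val) 1 = 0 ↔ 2 * a * b = 0 := by decide
  unfold disjN
  rw [Nat.beq_eq]
  change Nat.land (Nat.land (enc x) (enc y)) maskL = 0 ↔ _
  rw [maskL_eq, enc, enc, pack_land _ _ (dig_lt x) (dig_lt y),
    pack_land _ _ hl (by intro i; norm_num)]
  constructor
  · intro h j
    rw [h0] at h
    have := pack_inj _ _ hl2 (by intro i; norm_num) h (ix.symm j)
    simp only [Equiv.apply_symm_apply] at this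
    exact (key _ _).1 this
  · intro h
    have : ∀ i, Nat.land (Nat.land (x (ix i)).val (y (ix i)).val) 1 = 0 :=
      fun i => (key _ _).2 (h _)
    simp only [this]
    exact h0.symm

def pmN (z y : ℕ) : Bool := Bool.or (Nat.beq z y) (Nat.beq (Nat.land (Nat.add z y) 1061940247549077292454081822507064833618115) 0)

theorem enc_zero : enc 0 = 0 := by decide +kernel

theorem pmN_enc (z y : V) : pmN (enc z) (enc y) = true ↔ (z = y ∨ z = -y) := by
  have h := enc_add z y 1
  have e1 : Nat.mul (1 : Fin 4).val (enc y) = enc y := Nat.one_mul _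
  rw [e1] at h
  unfold pmN
  rw [Bool.or_eq_true, Nat.beq_eq, Nat.beq_eq, h]
  have e2 : (((1 : Fin 4).val : ℕ) : ZMod 4) • y = y := by simp
  rw [e2]
  constructor
  · rintro (h | h)
    · exact Or.inl (enc_inj h)
    · right
      rw [← enc_zero] at h
      exact eq_neg_of_add_eq_zero_left (enc_inj h)
  · rintro (h | h)
    · exact Or.inl (by rw [h])
    · right; rw [h, neg_add_cancel, enc_zero]

def twoN (p n : ℕ) : Bool :=
  Nat.beq (Nat.land n (Nat.mul 3 (Nat.pow 64 p))) (Nat.mul 2 (Nat.pow 64 p))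

theorem twoN_enc (x : V) (p : Fin 24) : twoN p.val (enc x) = true ↔ x (ix p) = 2 := by
  unfold twoN
  rw [Nat.beq_eq]
  change Nat.land (enc x) (3 * 64 ^ p.val) = 2 * 64 ^ p.val ↔ _
  have hl : ∀ i, Nat.land (x (ix i)).val (if i = p then 3 else 0) < 64 := by
    intro i; generalize x (ix i) = a; split_ifs <;> revert a <;> decide
  have key : ∀ a : ZMod 4, Nat.land a.val 3 = 2 ↔ a = 2 := by decide
  have key0 : ∀ a : ZMod 4, Nat.land a.val 0 = 0 := by decide
  rw [← pack_single, ← pack_single, enc,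
    pack_land _ _ (dig_lt x) (by intro i; split_ifs <;> norm_num)]
  constructor
  · intro h
    have := pack_inj _ _ hl (by intro i; split_ifs <;> norm_num) h p
    simp only [if_true] at this
    exact (key _).1 this
  · intro h
    congr 1
    funext i
    split_ifs with hi
    · rw [hi]; exact (key _).2 h
    · exact key0 _

/-! ### Depth-first enumeration of combinations of small Lee weight -/

noncomputable def force (n : ℕ) (k : ℕ → Bool) : Bool :=
  Nat.rec (motive := fun _ => Bool) (k 0) (fun n _ => k (Nat.succ n)) n

theorem force_eq (n : ℕ) (k : ℕ → Bool) : force n k = k n := by cases n <;> rfl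

noncomputable def leaf (acc : ℕ) (tail : List ℕ) (k : List ℕ → Bool) : Bool :=
  Bool.rec (motive := fun _ => Bool) (k tail) (k (List.cons acc tail)) (Nat.ble (leeN acc) 10)

def leafL (acc : ℕ) (tail : List ℕ) : List ℕ :=
  if leeN acc ≤ 10 then acc :: tail else tail

theorem leaf_eq (acc : ℕ) (tail : List ℕ) (k : List ℕ → Bool) :
    leaf acc tail k = k (leafL acc tail) := by
  unfold leaf leafL
  by_cases h : leeN acc ≤ 10
  · rw [if_pos h, Nat.ble_eq_true_of_le h]
  · rw [if_neg h]
    have : Nat.ble (leeN acc) 10 = false := by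
      rw [← Bool.not_eq_true, Nat.ble_eq]; exact h
    rw [this]

/-- Continuation-passing search, written with recursors for efficient kernel evaluation. -/
noncomputable def go (rows : List ℕ) : ℕ → ℕ → List ℕ → (List ℕ → Bool) → Bool :=
  List.rec (motive := fun _ => ℕ → ℕ → List ℕ → (List ℕ → Bool) → Bool)
    (fun _ acc tail k => leaf acc tail k)
    (fun r _ ih w acc tail k =>
      Nat.rec (motive := fun _ => Bool) (leaf acc tail k)
        (fun w1 _ =>
          ih (Nat.succ w1) acc tail fun t1 =>
          force (Nat.land (Nat.add acc (Nat.mul 1 r)) 1061940247549077292454081822507064833618115) fun a1 => ih w1 a1 t1 fun t2 =>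
          force (Nat.land (Nat.add acc (Nat.mul 3 r)) 1061940247549077292454081822507064833618115) fun a3 => ih w1 a3 t2 fun t3 =>
          Nat.rec (motive := fun _ => Bool) (k t3)
            (fun w2 _ => force (Nat.land (Nat.add acc (Nat.mul 2 r)) 1061940247549077292454081822507064833618115) fun a2 =>
              ih w2 a2 t3 k) w1) w)
    rows

def stp (k : ℕ) (acc r : ℕ) : ℕ := Nat.land (Nat.add acc (Nat.mul k r)) 1061940247549077292454081822507064833618115

/-- The list computed by `go`. -/
def goL : List ℕ → ℕ → ℕ → List ℕ → List ℕ
  | [], _, acc, tail => leafL acc tail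
  | _ :: _, 0, acc, tail => leafL acc tail
  | r :: rs, 1, acc, tail =>
      goL rs 0 (stp 3 acc r) (goL rs 0 (stp 1 acc r) (goL rs 1 acc tail))
  | r :: rs, w + 2, acc, tail =>
      goL rs w (stp 2 acc r) (goL rs (w + 1) (stp 3 acc r)
        (goL rs (w + 1) (stp 1 acc r) (goL rs (w + 2) acc tail)))

theorem go_eq (rows : List ℕ) (w acc : ℕ) (tail : List ℕ) (k : List ℕ → Bool) :
    go rows w acc tail k = k (goL rows w acc tail) := by
  induction rows generalizing w acc tail k with
  | nil => exact leaf_eq acc tail k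
  | cons r rs ih =>
    match w with
    | 0 => exact leaf_eq acc tail k
    | 1 =>
      change go rs 1 acc tail (fun t1 => force (stp 1 acc r) fun a1 => go rs 0 a1 t1 fun t2 =>
        force (stp 3 acc r) fun a3 => go rs 0 a3 t2 k) = _
      simp only [force_eq, ih, goL]
    | w + 2 =>
      change go rs (w + 2) acc tail (fun t1 => force (stp 1 acc r) fun a1 =>
        go rs (w + 1) a1 t1 fun t2 => force (stp 3 acc r) fun a3 => go rs (w + 1) a3 t2 fun t3 =>
        force (stp 2 acc r) fun a2 => go rs w a2 t3 k) = _
      simp only [force_eq, ih, goL]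

theorem leafL_tail {acc n : ℕ} {tail : List ℕ} (h : n ∈ tail) : n ∈ leafL acc tail := by
  unfold leafL; split_ifs
  · exact List.mem_cons_of_mem _ h
  · exact h

theorem goL_tail (rows : List ℕ) (w acc : ℕ) (tail : List ℕ) (n : ℕ) (h : n ∈ tail) :
    n ∈ goL rows w acc tail := by
  induction rows generalizing w acc tail with
  | nil => exact leafL_tail h
  | cons r rs ih =>
    match w with
    | 0 => exact leafL_tail h
    | 1 => exact ih _ _ _ (ih _ _ _ (ih _ _ _ h))
    | w + 2 => exact ih _ _ _ (ih _ _ _ (ih _ _ _ (ih _ _ _ h)))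

theorem stp_enc (f g : V) (k : Fin 4) :
    stp k.val (enc f) (enc g) = enc (f + (k.val : ZMod 4) • g) := enc_add f g k

theorem stp1 (f g : V) : stp 1 (enc f) (enc g) = enc (f + (1 : ZMod 4) • g) := stp_enc f g 1
theorem stp2 (f g : V) : stp 2 (enc f) (enc g) = enc (f + (2 : ZMod 4) • g) := stp_enc f g 2
theorem stp3 (f g : V) : stp 3 (enc f) (enc g) = enc (f + (3 : ZMod 4) • g) := stp_enc f g 3

theorem leafL_sound (C : Submodule (ZMod 4) V) (f : V) (hf : f ∈ C) (tail : List ℕ)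
    (ht : ∀ n ∈ tail, ∃ c ∈ C, enc c = n) : ∀ n ∈ leafL (enc f) tail, ∃ c ∈ C, enc c = n := by
  intro n hn
  unfold leafL at hn
  split_ifs at hn
  · rcases List.mem_cons.1 hn with h | h
    · exact ⟨f, hf, h.symm⟩
    · exact ht n h
  · exact ht n hn

theorem goL_sound (C : Submodule (ZMod 4) V) (Gs : List V) (hG : ∀ g ∈ Gs, g ∈ C)
    (w : ℕ) (f : V) (hf : f ∈ C) (tail : List ℕ) (ht : ∀ n ∈ tail, ∃ c ∈ C, enc c = n) :
    ∀ n ∈ goL (Gs.map enc) w (enc f) tail, ∃ c ∈ C, enc c = n := by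
  induction Gs generalizing w f tail with
  | nil => exact leafL_sound C f hf tail ht
  | cons g Gs ih =>
    have hG' : ∀ g ∈ Gs, g ∈ C := fun x hx => hG x (List.mem_cons_of_mem _ hx)
    have hs : ∀ k : ZMod 4, f + k • g ∈ C := fun k =>
      C.add_mem hf (C.smul_mem _ (hG g List.mem_cons_self))
    match w with
    | 0 => exact leafL_sound C f hf tail ht
    | 1 =>
      simp only [List.map_cons, goL, stp1, stp3]
      exact ih hG' _ _ (hs 3) _ (ih hG' _ _ (hs 1) _ (ih hG' _ _ hf _ ht))
    | w + 2 =>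
      simp only [List.map_cons, goL, stp1, stp2, stp3]
      exact ih hG' _ _ (hs 2) _ (ih hG' _ _ (hs 3) _ (ih hG' _ _ (hs 1) _ (ih hG' _ _ hf _ ht)))

/-- Linear combination described by a list of (coefficient, vector) pairs. -/
def comb (l : List (ZMod 4 × V)) : V := (l.map fun t => t.1 • t.2).sum

def lsum (l : List (ZMod 4 × V)) : ℕ := (l.map fun t => leeVal t.1).sum

theorem comb_zero (l : List (ZMod 4 × V)) (h : lsum l = 0) : comb l = 0 := by
  induction l with
  | nil => rfl
  | cons t l ih =>
    simp only [lsum, comb, List.map_cons, List.sum_cons] at *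
    have h0 : leeVal t.1 = 0 := by omega
    have key : ∀ a : ZMod 4, leeVal a = 0 → a = 0 := by decide
    rw [key _ h0, zero_smul, zero_add]
    exact ih (by omega)

theorem leafL_mem (f : V) (h : leeWt f ≤ 10) (tail : List ℕ) : enc f ∈ leafL (enc f) tail := by
  unfold leafL
  rw [leeN_enc, if_pos h]
  exact List.mem_cons_self

theorem goL_complete (l : List (ZMod 4 × V)) (w : ℕ) (f : V) (tail : List ℕ)
    (hw : lsum l ≤ w) (hl : leeWt (f + comb l) ≤ 10) :
    enc (f + comb l) ∈ goL (l.map fun t => enc t.2) w (enc f) tail := by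
  induction l generalizing w f tail with
  | nil =>
    simp only [comb, List.map_nil, List.sum_nil, add_zero] at *
    exact leafL_mem f hl tail
  | cons t l ih =>
    obtain ⟨a, g⟩ := t
    have hc : comb ((a, g) :: l) = a • g + comb l := by simp [comb]
    have hs : lsum ((a, g) :: l) = leeVal a + lsum l := by simp [lsum]
    match w with
    | 0 =>
      rw [comb_zero _ (by omega), add_zero] at hl ⊢
      exact leafL_mem f hl tail
    | 1 =>
      rw [hc, ← add_assoc] at hl ⊢
      rw [hs] at hw
      simp only [List.map_cons, goL, stp1, stp3]
      have cs : ∀ a : ZMod 4, a = 0 ∨ (a = 1 ∧ leeVal a = 1) ∨ (a = 2 ∧ leeVal a = 2) ∨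
        (a = 3 ∧ leeVal a = 1) := by decide
      rcases cs a with h | ⟨h, h'⟩ | ⟨h, h'⟩ | ⟨h, h'⟩
      · subst h
        rw [zero_smul, add_zero] at hl ⊢
        exact goL_tail _ _ _ _ _ (goL_tail _ _ _ _ _ (ih _ _ _ (by omega) hl))
      · rw [h'] at hw; subst h
        exact goL_tail _ _ _ _ _ (ih _ _ _ (by omega) hl)
      · omega
      · rw [h'] at hw; subst h
        exact ih _ _ _ (by omega) hl
    | w + 2 =>
      rw [hc, ← add_assoc] at hl ⊢
      rw [hs] at hw
      simp only [List.map_cons, goL, stp1, stp2, stp3]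
      have cs : ∀ a : ZMod 4, a = 0 ∨ (a = 1 ∧ leeVal a = 1) ∨ (a = 2 ∧ leeVal a = 2) ∨
        (a = 3 ∧ leeVal a = 1) := by decide
      rcases cs a with h | ⟨h, h'⟩ | ⟨h, h'⟩ | ⟨h, h'⟩
      · subst h
        rw [zero_smul, add_zero] at hl ⊢
        exact goL_tail _ _ _ _ _ (goL_tail _ _ _ _ _ (goL_tail _ _ _ _ _
          (ih _ _ _ (by omega) hl)))
      · rw [h'] at hw; subst h
        exact goL_tail _ _ _ _ _ (goL_tail _ _ _ _ _ (ih _ _ _ (by omega) hl))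
      · rw [h'] at hw; subst h
        exact ih _ _ _ (by omega) hl
      · rw [h'] at hw; subst h
        exact goL_tail _ _ _ _ _ (ih _ _ _ (by omega) hl)

/-! ### Codes given by two systematic generator matrices -/

def dot (x y : V) : ZMod 4 := ∑ i, x i * y i

theorem dot_add_left (x y z : V) : dot (x + y) z = dot x z + dot y z := by
  simp [dot, add_mul, Finset.sum_add_distrib]

theorem dot_smul_left (a : ZMod 4) (x z : V) : dot (a • x) z = a * dot x z := by
  simp only [dot, Pi.smul_apply, smul_eq_mul, Finset.mul_sum, mul_assoc]

theorem dot_comm (x y : V) : dot x y = dot y x := by simp [dot, mul_comm]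

/-- `G` is systematic on the left half, `H` on the right half. -/
structure Sys (G H : Fin 12 → V) : Prop where
  gl : ∀ i j, G i (Sum.inl j) = if j = i then 1 else 0
  hr : ∀ i j, H i (Sum.inr j) = if j = i then 1 else 0
  orth : ∀ i j, dot (G i) (G j) = 0
  hg : ∀ j, H j = ∑ i, H j (Sum.inl i) • G i

section
variable {G H : Fin 12 → V} (S : Sys G H)

abbrev cd (G : Fin 12 → V) : Submodule (ZMod 4) V := Submodule.span (ZMod 4) (Set.range G)

theorem g_mem (G : Fin 12 → V) (i : Fin 12) : G i ∈ cd G := Submodule.subset_span ⟨i, rfl⟩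

theorem h_mem (S : Sys G H) (j : Fin 12) : H j ∈ cd G := by
  rw [S.hg j]
  exact Submodule.sum_mem _ fun i _ => Submodule.smul_mem _ _ (g_mem G i)

theorem dot_span (x : V) (h : ∀ i, dot (G i) x = 0) (y : V) (hy : y ∈ cd G) : dot y x = 0 := by
  induction hy using Submodule.span_induction with
  | mem y hy => obtain ⟨i, rfl⟩ := hy; exact h i
  | zero => simp [dot]
  | add a b _ _ ha hb => rw [dot_add_left, ha, hb, add_zero]
  | smul a b _ hb => rw [dot_smul_left, hb, mul_zero]

theorem self_orth (S : Sys G H) (x y : V) (hx : x ∈ cd G) (hy : y ∈ cd G) : dot x y = 0 := by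
  refine dot_span y (fun i => ?_) x hx
  rw [dot_comm]
  exact dot_span (G i) (fun j => S.orth j i) y hy

theorem dual_left (S : Sys G H) (x : V) (hx : ∀ y ∈ cd G, dot x y = 0) :
    x = ∑ i, x (Sum.inl i) • G i := by
  set s := ∑ i, x (Sum.inl i) • G i with hs
  have hsm : s ∈ cd G := Submodule.sum_mem _ fun i _ => Submodule.smul_mem _ _ (g_mem G i)
  have hsl : ∀ j, s (Sum.inl j) = x (Sum.inl j) := by
    intro j
    simp [hs, Finset.sum_apply, S.gl]
  have hd : ∀ y ∈ cd G, dot (x + (-1 : ZMod 4) • s) y = 0 := by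
    intro y hy
    rw [dot_add_left, dot_smul_left, hx y hy, self_orth S s y hsm hy]; simp
  funext t
  rcases t with j | j
  · exact (hsl j).symm
  · have := hd (H j) (h_mem S j)
    simp only [dot, Fintype.sum_sum_type, Pi.add_apply, Pi.smul_apply, hsl, S.hr] at this
    simp at this
    exact eq_of_sub_eq_zero (by rw [sub_eq_add_neg]; exact this)

theorem mem_right (S : Sys G H) (x : V) (hx : x ∈ cd G) :
    x = ∑ i, x (Sum.inr i) • H i := by
  set s := ∑ i, x (Sum.inr i) • H i with hs
  have hsm : s ∈ cd G := Submodule.sum_mem _ fun i _ => Submodule.smul_mem _ _ (h_mem S i)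
  have hsl : ∀ j, s (Sum.inr j) = x (Sum.inr j) := by
    intro j
    simp [hs, Finset.sum_apply, S.hr]
  have hd : ∀ y ∈ cd G, dot (x + (-1 : ZMod 4) • s) y = 0 := by
    intro y hy
    rw [dot_add_left, dot_smul_left, self_orth S x y hx hy, self_orth S s y hsm hy]; simp
  funext t
  rcases t with j | j
  · have := hd (G j) (g_mem G j)
    simp only [dot, Fintype.sum_sum_type, Pi.add_apply, Pi.smul_apply, hsl, S.gl] at this
    simp at this
    exact eq_of_sub_eq_zero (by rw [sub_eq_add_neg]; exact this)
  · exact (hsl j).symm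

theorem mem_left (S : Sys G H) (x : V) (hx : x ∈ cd G) : x = ∑ i, x (Sum.inl i) • G i :=
  dual_left S x fun y hy => self_orth S x y hx hy

theorem selfDual (S : Sys G H) : SelfDualZ4 (cd G) := by
  apply Set.Subset.antisymm
  · intro x hx y hy
    exact self_orth S x y hx hy
  · intro x hx
    have := dual_left S x hx
    rw [SetLike.mem_coe, this]
    exact Submodule.sum_mem _ fun i _ => Submodule.smul_mem _ _ (g_mem G i)

/-- The list of all codewords of Lee weight at most 10. -/
def lst (G H : Fin 12 → V) : List ℕ :=
  goL ((List.ofFn H).map enc) 4 0 (goL ((List.ofFn G).map enc) 5 0 [])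

theorem lst_sound (S : Sys G H) : ∀ n ∈ lst G H, ∃ c ∈ cd G, enc c = n := by
  unfold lst
  rw [← enc_zero]
  refine goL_sound (cd G) _ ?_ _ _ (Submodule.zero_mem _) _
    (goL_sound (cd G) _ ?_ _ _ (Submodule.zero_mem _) _ ?_)
  · intro g hg
    obtain ⟨i, rfl⟩ := (List.mem_ofFn' _ _).1 hg
    exact h_mem S i
  · intro g hg
    obtain ⟨i, rfl⟩ := (List.mem_ofFn' _ _).1 hg
    exact g_mem G i
  · intro n hn; simp at hn

theorem comb_ofFn (a : Fin 12 → ZMod 4) (G : Fin 12 → V) :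
    comb (List.ofFn fun i => (a i, G i)) = ∑ i, a i • G i := by
  simp only [comb, List.map_ofFn, List.sum_ofFn, Function.comp_def]

theorem lsum_ofFn (a : Fin 12 → ZMod 4) (G : Fin 12 → V) :
    lsum (List.ofFn fun i => (a i, G i)) = ∑ i, leeVal (a i) := by
  simp only [lsum, List.map_ofFn, List.sum_ofFn, Function.comp_def]

theorem enum_mem (a : Fin 12 → ZMod 4) (G : Fin 12 → V) (w : ℕ) (tail : List ℕ)
    (hw : ∑ i, leeVal (a i) ≤ w) (c : V) (hc : c = ∑ i, a i • G i) (hl : leeWt c ≤ 10) :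
    enc c ∈ goL ((List.ofFn G).map enc) w 0 tail := by
  have := goL_complete (List.ofFn fun i => (a i, G i)) w 0 tail (by rw [lsum_ofFn]; exact hw)
    (by rw [comb_ofFn, zero_add, ← hc]; exact hl)
  rw [comb_ofFn, zero_add, ← hc, enc_zero] at this
  simpa only [List.map_ofFn, Function.comp_def] using this

theorem lst_complete (S : Sys G H) (c : V) (hc : c ∈ cd G) (hl : leeWt c ≤ 10) :
    enc c ∈ lst G H := by
  unfold lst
  have hsum : leeWt c = ∑ i, leeVal (c (Sum.inl i)) + ∑ i, leeVal (c (Sum.inr i)) := by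
    simp only [leeWt, Fintype.sum_sum_type]
  by_cases h : ∑ i, leeVal (c (Sum.inl i)) ≤ 5
  · apply goL_tail
    exact enum_mem (fun i => c (Sum.inl i)) G 5 _ h c (mem_left S c hc) hl
  · exact enum_mem (fun i => c (Sum.inr i)) H 4 _ (by omega) c (mem_right S c hc) hl

end

/-! ### Final checks -/

/-- Continuation-passing filter: codewords with entry `2` at position `p`. -/
noncomputable def fk (p : ℕ) (L : List ℕ) : List ℕ → (List ℕ → Bool) → Bool :=
  List.rec (motive := fun _ => List ℕ → (List ℕ → Bool) → Bool)
    (fun acc k => k acc)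
    (fun n _ ih acc k =>
      Bool.rec (motive := fun _ => Bool) (ih acc k) (ih (List.cons n acc) k) (twoN p n)) L

theorem fk_eq (p : ℕ) (L acc : List ℕ) (k : List ℕ → Bool) :
    fk p L acc k = k ((L.filter (twoN p)).reverse ++ acc) := by
  induction L generalizing acc with
  | nil => rfl
  | cons n L ih =>
    change Bool.rec (motive := fun _ => Bool) (fk p L acc k) (fk p L (List.cons n acc) k)
      (twoN p n) = _
    cases h : twoN p n <;> simp [ih, h]

def bkt (p : ℕ) (L : List ℕ) : List ℕ := (L.filter (twoN p)).reverse ++ []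

theorem mem_bkt {p n : ℕ} {L : List ℕ} : n ∈ bkt p L ↔ n ∈ L ∧ twoN p n = true := by
  simp [bkt]

def minOK (L : List ℕ) : Bool :=
  L.all (fun n => Bool.or (Nat.beq n 0) (Nat.beq (leeN n) 10)) &&
    L.any (fun n => Nat.beq (leeN n) 10)

def aPos (L : List ℕ) : Bool := L.all fun x => L.any fun y => disjN x y
def aNeg (L : List ℕ) : Bool := L.any fun x => L.all fun y => Bool.not (disjN x y)
def kPos (L : List ℕ) : Bool := L.any fun x => L.any fun y => Bool.and (disjN x y) (L.all fun z =>
  Bool.and (Bool.or (Bool.not (disjN x z)) (pmN z y)) (Bool.or (Bool.not (disjN y z)) (pmN z x)))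
def kNeg (L : List ℕ) : Bool := L.all fun x => L.all fun y => Bool.or (Bool.not (disjN x y))
  (L.any fun z => Bool.or (Bool.and (disjN x z) (Bool.not (pmN z y)))
    (Bool.and (disjN y z) (Bool.not (pmN z x))))

def posns : List ℕ := [0,1,2,3,4,5,6,7,8,9,10,11,12,13,14,15,16,17,18,19,20,21,22,23]

noncomputable def fin1 (L : List ℕ) : Bool :=
  minOK L && (fk 1 L [] aNeg && posns.all fun p => fk p L [] kNeg)
noncomputable def fin2 (L : List ℕ) : Bool :=
  minOK L && (fk 1 L [] aNeg && fk 1 L [] kPos)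
noncomputable def fin3 (L : List ℕ) : Bool :=
  minOK L && posns.all fun p => fk p L [] aPos

noncomputable def run (gs hs : List ℕ) (fin : List ℕ → Bool) : Bool :=
  go gs 5 0 [] fun L => go hs 4 0 L fin

def W (C : Set V) : Set V := {x | x ∈ C ∧ leeWt x = 10}

def PA (C : Set V) : Prop :=
  ∀ p, ∀ x ∈ W C, x p = 2 → ∃ y ∈ W C, y p = 2 ∧ Disj x y

def PK (C : Set V) : Prop :=
  ∃ p, ∃ x ∈ W C, x p = 2 ∧ ∃ y ∈ W C, y p = 2 ∧ Disj x y ∧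
    ∀ z ∈ W C, z p = 2 → (Disj x z → z = y ∨ z = -y) ∧ (Disj y z → z = x ∨ z = -x)

section
variable {G H : Fin 12 → V}

theorem zero_ne_two : ¬ ((0 : ZMod 4) = 2) := by decide

theorem min_all (S : Sys G H) (h : minOK (lst G H) = true) (c : V) (hc : c ∈ cd G)
    (hl : leeWt c ≤ 10) : c = 0 ∨ leeWt c = 10 := by
  unfold minOK at h
  rw [Bool.and_eq_true, List.all_eq_true] at h
  have := h.1 _ (lst_complete S c hc hl)
  rw [Bool.or_eq_true, Nat.beq_eq, Nat.beq_eq, leeN_enc] at this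
  rcases this with h | h
  · left; rw [← enc_zero] at h; exact enc_inj h
  · exact Or.inr h

theorem minLee_eq (S : Sys G H) (h : minOK (lst G H) = true) :
    minLee (cd G : Set V) = 10 := by
  have hz : leeWt (0 : V) = 0 := by decide +kernel
  have h' := h
  unfold minOK at h'
  rw [Bool.and_eq_true, List.any_eq_true] at h'
  obtain ⟨n, hn, hn2⟩ := h'.2
  obtain ⟨c, hc, rfl⟩ := lst_sound S n hn
  rw [Nat.beq_eq, leeN_enc] at hn2
  have hne : c ≠ 0 := by rintro rfl; rw [hz] at hn2; exact absurd hn2 (by norm_num)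
  apply le_antisymm
  · exact Nat.sInf_le ⟨c, hc, hne, hn2⟩
  · refine le_csInf ⟨10, c, hc, hne, hn2⟩ ?_
    rintro d ⟨x, hx, hx0, rfl⟩
    by_contra hlt
    rcases min_all S h x hx (by omega) with h | h
    · exact hx0 h
    · omega

/-- Members of buckets are exactly the weight 10 codewords with entry 2 at the position. -/
theorem bkt_iff (S : Sys G H) (h : minOK (lst G H) = true) (p : Fin 24) (n : ℕ) :
    n ∈ bkt p.val (lst G H) ↔ ∃ x ∈ W (cd G : Set V), x (ix p) = 2 ∧ enc x = n := by
  rw [mem_bkt]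
  constructor
  · rintro ⟨h1, h2⟩
    obtain ⟨c, hc, rfl⟩ := lst_sound S n h1
    rw [twoN_enc] at h2
    have hl : leeWt c ≤ 10 := by
      unfold minOK at h
      rw [Bool.and_eq_true, List.all_eq_true] at h
      have := h.1 _ h1
      rw [Bool.or_eq_true, Nat.beq_eq, Nat.beq_eq, leeN_enc] at this
      rcases this with h | h
      · rw [← enc_zero] at h
        rw [enc_inj h] at h2
        exact absurd h2 zero_ne_two
      · omega
    rcases min_all S h c hc hl with h0 | h10
    · rw [h0] at h2
      exact absurd h2 zero_ne_two
    · exact ⟨c, ⟨hc, h10⟩, h2, rfl⟩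
  · rintro ⟨x, ⟨hx, h10⟩, h2, rfl⟩
    exact ⟨lst_complete S x hx (le_of_eq h10), (twoN_enc x p).2 h2⟩

theorem aPos_spec (S : Sys G H) (h : minOK (lst G H) = true)
    (ha : ∀ p : Fin 24, aPos (bkt p.val (lst G H)) = true) : PA (cd G : Set V) := by
  intro q x hx hq
  have ha' := ha (ix.symm q)
  unfold aPos at ha'
  rw [List.all_eq_true] at ha'
  have hb := ha' _ ((bkt_iff S h (ix.symm q) (enc x)).2 ⟨x, hx, by simpa using hq, rfl⟩)
  rw [List.any_eq_true] at hb
  obtain ⟨n, hn, hd⟩ := hb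
  obtain ⟨y, hy, hyp, rfl⟩ := (bkt_iff S h (ix.symm q) n).1 hn
  exact ⟨y, hy, by simpa using hyp, (disjN_enc x y).1 hd⟩

theorem aNeg_spec (S : Sys G H) (h : minOK (lst G H) = true) (p : Fin 24)
    (ha : aNeg (bkt p.val (lst G H)) = true) : ¬ PA (cd G : Set V) := by
  intro hA
  unfold aNeg at ha
  rw [List.any_eq_true] at ha
  obtain ⟨n, hn, hall⟩ := ha
  rw [List.all_eq_true] at hall
  obtain ⟨x, hx, hxp, rfl⟩ := (bkt_iff S h p n).1 hn
  obtain ⟨y, hy, hyp, hd⟩ := hA _ x hx hxp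
  have := hall _ ((bkt_iff S h p (enc y)).2 ⟨y, hy, hyp, rfl⟩)
  rw [(disjN_enc x y).2 hd] at this
  exact absurd this (by decide)

theorem kPos_spec (S : Sys G H) (h : minOK (lst G H) = true) (p : Fin 24)
    (hk : kPos (bkt p.val (lst G H)) = true) : PK (cd G : Set V) := by
  unfold kPos at hk
  rw [List.any_eq_true] at hk
  obtain ⟨n, hn, hk⟩ := hk
  rw [List.any_eq_true] at hk
  obtain ⟨m, hm, hk⟩ := hk
  rw [Bool.and_eq_true, List.all_eq_true] at hk
  obtain ⟨x, hx, hxp, rfl⟩ := (bkt_iff S h p n).1 hn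
  obtain ⟨y, hy, hyp, rfl⟩ := (bkt_iff S h p m).1 hm
  refine ⟨_, x, hx, hxp, y, hy, hyp, (disjN_enc x y).1 hk.1, fun z hz hzp => ?_⟩
  have := hk.2 _ ((bkt_iff S h p (enc z)).2 ⟨z, hz, hzp, rfl⟩)
  rw [Bool.and_eq_true, Bool.or_eq_true, Bool.or_eq_true, pmN_enc, pmN_enc] at this
  constructor
  · intro hd
    rw [(disjN_enc x z).2 hd] at this
    exact this.1.resolve_left (by decide)
  · intro hd
    rw [(disjN_enc y z).2 hd] at this
    exact this.2.resolve_left (by decide)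

theorem kNeg_spec (S : Sys G H) (h : minOK (lst G H) = true)
    (hk : ∀ p : Fin 24, kNeg (bkt p.val (lst G H)) = true) : ¬ PK (cd G : Set V) := by
  rintro ⟨q, x, hx, hxq, y, hy, hyq, hd, hz⟩
  have hk := hk (ix.symm q)
  have hb : ∀ x ∈ W (cd G : Set V), x q = 2 → enc x ∈ bkt (ix.symm q).val (lst G H) :=
    fun x hx hq => (bkt_iff S h (ix.symm q) (enc x)).2 ⟨x, hx, by simpa using hq, rfl⟩
  unfold kNeg at hk
  rw [List.all_eq_true] at hk
  have hk := hk _ (hb x hx hxq)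
  rw [List.all_eq_true] at hk
  have hk := hk _ (hb y hy hyq)
  rw [(disjN_enc x y).2 hd, Bool.or_eq_true] at hk
  have hk := hk.resolve_left (by decide)
  rw [List.any_eq_true] at hk
  obtain ⟨n, hn, hk⟩ := hk
  obtain ⟨z, hzW, hzq, rfl⟩ := (bkt_iff S h (ix.symm q) n).1 hn
  have hz := hz z hzW (by simpa using hzq)
  rw [Bool.or_eq_true, Bool.and_eq_true, Bool.and_eq_true, disjN_enc, disjN_enc] at hk
  rcases hk with ⟨h1, h2⟩ | ⟨h1, h2⟩
  · rw [(pmN_enc z y).2 (hz.1 h1)] at h2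
    exact absurd h2 (by decide)
  · rw [(pmN_enc z x).2 (hz.2 h1)] at h2
    exact absurd h2 (by decide)

end

/-! ### Invariance under equivalence -/

def phi (σ : Equiv.Perm (Fin 12 ⊕ Fin 12)) (ε : V) (x : V) : V := fun i => ε i * x (σ i)

section
variable (σ : Equiv.Perm (Fin 12 ⊕ Fin 12)) (ε : V)

theorem phi_lee (hε : ∀ i, ε i = 1 ∨ ε i = -1) (x : V) : leeWt (phi σ ε x) = leeWt x := by
  have key : ∀ e a : ZMod 4, (e = 1 ∨ e = -1) → leeVal (e * a) = leeVal a := by decide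
  unfold leeWt phi
  simp only [fun i => key (ε i) (x (σ i)) (hε i)]
  exact Equiv.sum_comp σ (fun j => leeVal (x j))

theorem phi_two (hε : ∀ i, ε i = 1 ∨ ε i = -1) (x : V) (q) :
    phi σ ε x (σ.symm q) = 2 ↔ x q = 2 := by
  have key : ∀ e a : ZMod 4, (e = 1 ∨ e = -1) → (e * a = 2 ↔ a = 2) := by decide
  unfold phi
  rw [key _ _ (hε _), Equiv.apply_symm_apply]

theorem phi_disj (hε : ∀ i, ε i = 1 ∨ ε i = -1) (x y : V) :
    Disj (phi σ ε x) (phi σ ε y) ↔ Disj x y := by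
  have key : ∀ e a b : ZMod 4, (e = 1 ∨ e = -1) →
    (2 * (e * a) * (e * b) = 0 ↔ 2 * a * b = 0) := by decide
  unfold Disj phi
  simp only [fun i => key (ε i) (x (σ i)) (y (σ i)) (hε i)]
  exact ⟨fun h i => by simpa using h (σ.symm i), fun h i => h _⟩

theorem phi_inj (hε : ∀ i, ε i = 1 ∨ ε i = -1) {x y : V} (h : phi σ ε x = phi σ ε y) : x = y := by
  have key : ∀ e a b : ZMod 4, (e = 1 ∨ e = -1) → e * a = e * b → a = b := by decide
  funext i
  have := congrFun h (σ.symm i)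
  unfold phi at this
  have := key _ _ _ (hε _) this
  simpa using this

theorem phi_neg (x : V) : phi σ ε (-x) = -phi σ ε x := by
  funext i; simp [phi]

theorem phi_W (hε : ∀ i, ε i = 1 ∨ ε i = -1) (C : Set V) (x : V) :
    phi σ ε x ∈ W (phi σ ε '' C) ↔ x ∈ W C := by
  unfold W
  simp only [Set.mem_ofPred_eq, phi_lee σ ε hε]
  constructor
  · rintro ⟨⟨y, hy, hxy⟩, h⟩
    rw [← phi_inj σ ε hε hxy]
    refine ⟨hy, ?_⟩
    rw [phi_inj σ ε hε hxy]; exact h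
  · rintro ⟨h1, h2⟩
    exact ⟨⟨x, h1, rfl⟩, h2⟩

end

theorem PA_pull {C C' : Set V} (h : Z4Equiv C C') (hA : PA C') : PA C := by
  obtain ⟨σ, ε, hε, rfl⟩ := h
  change PA (phi σ ε '' C) at hA
  intro q x hx hq
  obtain ⟨y', hy', hy2, hd⟩ := hA (σ.symm q) (phi σ ε x) ((phi_W σ ε hε C x).2 hx)
    ((phi_two σ ε hε x q).2 hq)
  obtain ⟨y, -, rfl⟩ := hy'.1
  exact ⟨y, (phi_W σ ε hε C y).1 hy', (phi_two σ ε hε y q).1 hy2, (phi_disj σ ε hε x y).1 hd⟩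

theorem PK_pull {C C' : Set V} (h : Z4Equiv C C') (hK : PK C') : PK C := by
  obtain ⟨σ, ε, hε, rfl⟩ := h
  change PK (phi σ ε '' C) at hK
  obtain ⟨p, x', hx', hxp, y', hy', hyp, hd, hz⟩ := hK
  obtain ⟨x, -, rfl⟩ := hx'.1
  obtain ⟨y, -, rfl⟩ := hy'.1
  obtain ⟨q, rfl⟩ := σ.symm.surjective p
  refine ⟨q, x, (phi_W σ ε hε C x).1 hx', (phi_two σ ε hε x q).1 hxp,
    y, (phi_W σ ε hε C y).1 hy', (phi_two σ ε hε y q).1 hyp, (phi_disj σ ε hε x y).1 hd,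
    fun z hzW hzq => ?_⟩
  have h := hz (phi σ ε z) ((phi_W σ ε hε C z).2 hzW) ((phi_two σ ε hε z q).2 hzq)
  rw [phi_disj σ ε hε, phi_disj σ ε hε, ← phi_neg, ← phi_neg] at h
  exact ⟨fun hd => (h.1 hd).imp (phi_inj σ ε hε) (phi_inj σ ε hε),
    fun hd => (h.2 hd).imp (phi_inj σ ε hε) (phi_inj σ ε hε)⟩

/-! ### The three codes -/

/-- Generators systematic on the right half. -/
def hRow (r : Fin 11 → ZMod 4) (j : Fin 12) : V :=
  Sum.elim (fun i => - bdcB 0 1 1 r i j) (fun i => if i = j then 1 else 0)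

theorem run_eq (G H : Fin 12 → V) (gs hs : List ℕ) (fin : List ℕ → Bool)
    (hg : (List.ofFn G).map enc = gs) (hh : (List.ofFn H).map enc = hs) :
    run gs hs fin = fin (lst G H) := by
  unfold run lst
  rw [go_eq, go_eq, hg, hh]

theorem posns_all (f : ℕ → Bool) (h : posns.all f = true) (p : Fin 24) : f p.val = true := by
  rw [List.all_eq_true] at h
  apply h
  revert p
  decide

theorem notTypeII (r : Fin 11 → ZMod 4) (h : ¬ 8 ∣ eucWt (bdcRow 0 1 1 r 0)) :
    ¬ TypeII (cd (bdcRow 0 1 1 r) : Set V) := fun hT => h (hT _ (g_mem _ 0))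

def r1 : Fin 11 → ZMod 4 := ![1,3,1,0,3,3,0,3,2,2,2]
def r2 : Fin 11 → ZMod 4 := ![0,1,1,3,0,3,3,2,3,2,2]
def r3 : Fin 11 → ZMod 4 := ![3,1,0,3,0,0,0,1,3,3,2]

theorem sys1 : Sys (bdcRow 0 1 1 r1) (hRow r1) where
  gl := by decide +kernel
  hr := by decide +kernel
  orth := by decide +kernel
  hg := by decide +kernel

def gs1 : List ℕ :=
  [353980082516359097479896616154677844639745,
   707961453051768592436620963619405329072192,
   708042598251943633179258947731744987549696,
   713235891063146240708089930921483130109952,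
   1045606630980113122553272855064724253966336,
   16588787135370419411493182487451968471040,
   1061682376663706842038054590776138333683712,
   1045436510885368466437524268017953070383104,
   5701101071712428003583611494096219144192,
   364870468589595391931842047201370376765440,
   1050964791203481942106895114722212252221440,
   359511041430974870843317800566683856797696]

def hs1 : List ℕ :=
  [4947241077292009271488,
   302308700930340083474627,
   19343034493058895697162307,
   1237940040456320715682746563,
   79228162589204525803695779843,
   5070602400986723168566884696131,
   324518553658427916305410975338563,
   20769187434139386643546302421667843,
   1329227995784916022820480485341528131,
   85070591730234616015777785322567372931,
   5444517870735015415565045294905021440131,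
   348449143727040986586718165908182081740931]

theorem gs1_eq : (List.ofFn (bdcRow 0 1 1 r1)).map enc = gs1 := by decide +kernel
theorem hs1_eq : (List.ofFn (hRow r1)).map enc = hs1 := by decide +kernel

theorem run1 : run gs1 hs1 fin1 = true := by decide +kernel

theorem sys2 : Sys (bdcRow 0 1 1 r2) (hRow r2) where
  gl := by decide +kernel
  hr := by decide +kernel
  orth := by decide +kernel
  hg := by decide +kernel

def gs2 : List ℕ :=
  [353980082516359097479896616154677844639745,
   708045256708091182851491803453188250533952,
   713406032256589419730992697093851961102336,
   1056495667360476580019049890096329437478912,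
   713487115478631697221223424510183713275904,
   1061684993571182339393816444741561576587264,
   1045603992963800297206282921805040616210432,
   16419954091349597204137453867699152093184,
   1050877061846374220767287959111958085500928,
   353896362576080705108459841510417186684928,
   348622006338541985410433950501208087068672,
   11063207136063924736776925911825711628288]

def hs2 : List ℕ :=
  [4947241077292009271488,
   302456292615923069100035,
   19343035627970467486761155,
   1237940113090661310217072835,
   79228162515435840984247447619,
   5070602400987893822991836647427,
   324518553658502838188607900221507,
   20769187434139459277588035968962627,
   1329227995784915949032668562723180675,
   85070591730234616015724305144638349379,
   5444517870735015415561622563517563932803,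
   348449143727040986586499111099384801271939]

theorem gs2_eq : (List.ofFn (bdcRow 0 1 1 r2)).map enc = gs2 := by decide +kernel
theorem hs2_eq : (List.ofFn (hRow r2)).map enc = hs2 := by decide +kernel

theorem run2 : run gs2 hs2 fin2 = true := by decide +kernel

theorem sys3 : Sys (bdcRow 0 1 1 r3) (hRow r3) where
  gl := by decide +kernel
  hr := by decide +kernel
  orth := by decide +kernel
  hg := by decide +kernel

def gs3 : List ℕ :=
  [353980082516359097479896616154677844639745,
   713488382069711212924476249980309231108160,
   1061766055400271344401997274829594717851648,
   1050791950025496617729856047439161657131008,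
   348449206039914110712817494451445771010048,
   3988023879944089323738727037483876352,
   255233528316421419210190109611319623680,
   16334945812250970531943078594336807452672,
   1045436531984062113746847941616768028508160,
   5702451388105855800298721818253539147776,
   364956888838774770921609107947438856994816,
   1056495687150962197451987002470594986901504]

def hs3 : List ℕ :=
  [4947241077292009271488,
   302452833846943556051011,
   19342814266755778651623619,
   1237940113072369833703911427,
   79228162514265186487405117507,
   5070602400912971935193927520259,
   324518553658430203852411361296387,
   20769187434139533046554327122968579,
   1329227995784915947880028326934347971,
   85070591730234615941955330054153056323,
   5444517870735015415562774640596150390851,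
   348449143727040986586572844032414334587011]

theorem gs3_eq : (List.ofFn (bdcRow 0 1 1 r3)).map enc = gs3 := by decide +kernel
theorem hs3_eq : (List.ofFn (hRow r3)).map enc = hs3 := by decide +kernel

theorem run3 : run gs3 hs3 fin3 = true := by decide +kernel

theorem chk1 : minOK (lst (bdcRow 0 1 1 r1) (hRow r1)) = true ∧
    ¬ PA (cd (bdcRow 0 1 1 r1) : Set V) ∧ ¬ PK (cd (bdcRow 0 1 1 r1) : Set V) := by
  have h := run1
  rw [run_eq _ _ _ _ _ gs1_eq hs1_eq] at h
  unfold fin1 at h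
  rw [Bool.and_eq_true, Bool.and_eq_true] at h
  simp only [fk_eq] at h
  exact ⟨h.1, aNeg_spec sys1 h.1 1 h.2.1,
    kNeg_spec sys1 h.1 fun p => posns_all _ h.2.2 p⟩

theorem chk2 : minOK (lst (bdcRow 0 1 1 r2) (hRow r2)) = true ∧
    ¬ PA (cd (bdcRow 0 1 1 r2) : Set V) ∧ PK (cd (bdcRow 0 1 1 r2) : Set V) := by
  have h := run2
  rw [run_eq _ _ _ _ _ gs2_eq hs2_eq] at h
  unfold fin2 at h
  rw [Bool.and_eq_true, Bool.and_eq_true] at h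
  simp only [fk_eq] at h
  exact ⟨h.1, aNeg_spec sys2 h.1 1 h.2.1, kPos_spec sys2 h.1 1 h.2.2⟩

theorem chk3 : minOK (lst (bdcRow 0 1 1 r3) (hRow r3)) = true ∧
    PA (cd (bdcRow 0 1 1 r3) : Set V) := by
  have h := run3
  rw [run_eq _ _ _ _ _ gs3_eq hs3_eq] at h
  unfold fin3 at h
  rw [Bool.and_eq_true] at h
  simp only [fk_eq] at h
  exact ⟨h.1, aPos_spec sys3 h.1 fun p => posns_all _ h.2 p⟩

end Z4Pack

open Z4Note in
/-- the three listed bordered double circulant codes of length 24 are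
self-dual Type I `ZMod 4`-codes of minimum Lee weight 10 and pairwise inequivalent. -/
theorem three_inequivalent_bdc_codes_length24 :
    let D1 : Submodule (ZMod 4) ((Fin 12 ⊕ Fin 12) → ZMod 4) :=
      bdcCode 0 1 1 ![1,3,1,0,3,3,0,3,2,2,2]
    let D2 : Submodule (ZMod 4) ((Fin 12 ⊕ Fin 12) → ZMod 4) :=
      bdcCode 0 1 1 ![0,1,1,3,0,3,3,2,3,2,2]
    let D3 : Submodule (ZMod 4) ((Fin 12 ⊕ Fin 12) → ZMod 4) :=
      bdcCode 0 1 1 ![3,1,0,3,0,0,0,1,3,3,2]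
    (SelfDualZ4 D1 ∧ ¬ TypeII (D1 : Set ((Fin 12 ⊕ Fin 12) → ZMod 4)) ∧
      minLee (D1 : Set ((Fin 12 ⊕ Fin 12) → ZMod 4)) = 10) ∧
    (SelfDualZ4 D2 ∧ ¬ TypeII (D2 : Set ((Fin 12 ⊕ Fin 12) → ZMod 4)) ∧
      minLee (D2 : Set ((Fin 12 ⊕ Fin 12) → ZMod 4)) = 10) ∧
    (SelfDualZ4 D3 ∧ ¬ TypeII (D3 : Set ((Fin 12 ⊕ Fin 12) → ZMod 4)) ∧
      minLee (D3 : Set ((Fin 12 ⊕ Fin 12) → ZMod 4)) = 10) ∧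
    ¬ Z4Equiv (D1 : Set ((Fin 12 ⊕ Fin 12) → ZMod 4))
        (D2 : Set ((Fin 12 ⊕ Fin 12) → ZMod 4)) ∧
    ¬ Z4Equiv (D1 : Set ((Fin 12 ⊕ Fin 12) → ZMod 4))
        (D3 : Set ((Fin 12 ⊕ Fin 12) → ZMod 4)) ∧
    ¬ Z4Equiv (D2 : Set ((Fin 12 ⊕ Fin 12) → ZMod 4))
        (D3 : Set ((Fin 12 ⊕ Fin 12) → ZMod 4)) := by
  intro D1 D2 D3
  exact ⟨⟨Z4Pack.selfDual Z4Pack.sys1, Z4Pack.notTypeII Z4Pack.r1 (by decide +kernel),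
      Z4Pack.minLee_eq Z4Pack.sys1 Z4Pack.chk1.1⟩,
    ⟨Z4Pack.selfDual Z4Pack.sys2, Z4Pack.notTypeII Z4Pack.r2 (by decide +kernel),
      Z4Pack.minLee_eq Z4Pack.sys2 Z4Pack.chk2.1⟩,
    ⟨Z4Pack.selfDual Z4Pack.sys3, Z4Pack.notTypeII Z4Pack.r3 (by decide +kernel),
      Z4Pack.minLee_eq Z4Pack.sys3 Z4Pack.chk3.1⟩,
    fun h => Z4Pack.chk1.2.2 (Z4Pack.PK_pull h Z4Pack.chk2.2.2),
    fun h => Z4Pack.chk1.2.1 (Z4Pack.PA_pull h Z4Pack.chk3.2),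
    fun h => Z4Pack.chk2.2.1 (Z4Pack.PA_pull h Z4Pack.chk3.2)⟩
end

section
/- There are at least three pairwise inequivalent extremal Type II Z4-codes of length 56, i.e., at least three pairwise inequivalent self-dual Z4-codes of length 56 in which every Euclidean weight is divisible by 8 and whose minimum Euclidean weight is 24. -/
open Finset

/-! ## The abstract construction -/

namespace Z4Note

/-- The self-dual code with residue generators `g` (systematic on the coordinates `e`). -/
def cod {k : ℕ} (e : Fin k → Fin 56) (g : Fin k → Fin 56 → ZMod 4) :
    Submodule (ZMod 4) (Fin 56 → ZMod 4) where
  carrier := {x | (∀ i, ∑ j, x j * g i j = 0) ∧ ∀ j, 2 * x j = 2 * ∑ i, x (e i) * g i j}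
  zero_mem' := by simp
  add_mem' := by
    rintro x y ⟨hx, hx'⟩ ⟨hy, hy'⟩
    refine ⟨fun i => ?_, fun j => ?_⟩
    · simp only [Pi.add_apply, add_mul, Finset.sum_add_distrib, hx, hy, add_zero]
    · simp only [Pi.add_apply, add_mul, Finset.sum_add_distrib, mul_add, hx', hy']
  smul_mem' := by
    rintro a x ⟨hx, hx'⟩
    refine ⟨fun i => ?_, fun j => ?_⟩
    · simp only [Pi.smul_apply, smul_eq_mul, mul_assoc, ← Finset.mul_sum, hx, mul_zero]
    · simp only [Pi.smul_apply, smul_eq_mul, mul_assoc, ← Finset.mul_sum]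
      rw [mul_left_comm, hx', mul_left_comm]

/-- The conditions on the generators that make `cod` an extremal Type II code. -/
structure Good {k : ℕ} (e : Fin k → Fin 56) (g : Fin k → Fin 56 → ZMod 4) : Prop where
  hid : ∀ i l, g i (e l) = if i = l then 1 else 0
  horth : ∀ i l, ∑ j, g i j * g l j = 0
  hnorm : ∀ i, 8 ∣ eucWt (g i)
  hone : ∀ j, 2 * ∑ i, g i j = 2
  hmin : ∀ c : Fin k → ZMod 4,
    (Finset.univ.filter fun j => 2 * ∑ i, c i * g i j ≠ 0).card = 0 ∨
    20 ≤ (Finset.univ.filter fun j => 2 * ∑ i, c i * g i j ≠ 0).card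
  hsid : ∀ y : Fin 56 → ZMod 4, (∀ j, 2 * y j = 0) → (∀ i, ∑ j, y j * g i j = 0) →
    (Finset.univ.filter fun j => y j ≠ 0).card ≠ 2 ∧
    (Finset.univ.filter fun j => y j ≠ 0).card ≠ 4
  hword : ∃ y : Fin 56 → ZMod 4, (∀ j, 2 * y j = 0) ∧ (∀ i, ∑ j, y j * g i j = 0) ∧
    eucWt y = 24

section abstract_part

variable {k : ℕ} {e : Fin k → Fin 56} {g : Fin k → Fin 56 → ZMod 4}

theorem mem_cod {x : Fin 56 → ZMod 4} : x ∈ cod e g ↔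
    (∀ i, ∑ j, x j * g i j = 0) ∧ ∀ j, 2 * x j = 2 * ∑ i, x (e i) * g i j := Iff.rfl

theorem two_mul_two_mul (a : ZMod 4) : 2 * (2 * a) = 0 := by revert a; decide

theorem even_mul_even (a b : ZMod 4) (ha : 2 * a = 0) (hb : 2 * b = 0) : a * b = 0 := by
  revert a b; decide

theorem even_cases (a : ZMod 4) (ha : 2 * a = 0) : a = 0 ∨ a = 2 := by
  revert a; decide

/-- even words orthogonal to the generators lie in the code -/
theorem mem_of_even {y : Fin 56 → ZMod 4} (h : ∀ j, 2 * y j = 0)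
    (h' : ∀ i, ∑ j, y j * g i j = 0) : y ∈ cod e g := by
  refine mem_cod.2 ⟨h', fun j => ?_⟩
  rw [h, Finset.mul_sum]
  symm
  apply Finset.sum_eq_zero
  intro i _
  rw [← mul_assoc, h, zero_mul]

theorem gen_mem (H : Good e g) (i : Fin k) : g i ∈ cod e g := by
  refine mem_cod.2 ⟨fun l => H.horth i l, fun j => ?_⟩
  simp [H.hid]

/-- The combination of generators with the same information symbols as `x`. -/
def lin (g : Fin k → Fin 56 → ZMod 4) (c : Fin k → ZMod 4) : Fin 56 → ZMod 4 :=
  fun j => ∑ i, c i * g i j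

theorem lin_dot (c : Fin k → ZMod 4) (y : Fin 56 → ZMod 4) (h : ∀ i, ∑ j, y j * g i j = 0) :
    ∑ j, lin g c j * y j = 0 := by
  simp only [lin, Finset.sum_mul]
  rw [Finset.sum_comm]
  apply Finset.sum_eq_zero
  intro i _
  have : ∀ j, c i * g i j * y j = c i * (y j * g i j) := fun j => by ring
  simp only [this, ← Finset.mul_sum, h, mul_zero]

theorem lin_orth (H : Good e g) (c : Fin k → ZMod 4) (l : Fin k) :
    ∑ j, lin g c j * g l j = 0 :=
  lin_dot c (g l) (fun i => H.horth l i)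

/-- decomposition of a codeword -/
theorem decomp (H : Good e g) {x : Fin 56 → ZMod 4} (hx : x ∈ cod e g) :
    ∃ y : Fin 56 → ZMod 4, x = lin g (fun i => x (e i)) + y ∧ (∀ j, 2 * y j = 0) ∧
      ∀ i, ∑ j, y j * g i j = 0 := by
  obtain ⟨h1, h2⟩ := mem_cod.1 hx
  refine ⟨x - lin g (fun i => x (e i)), by simp, fun j => ?_, fun i => ?_⟩
  · simp only [Pi.sub_apply, mul_sub, h2, lin, sub_self]
  · simp only [Pi.sub_apply, sub_mul, Finset.sum_sub_distrib, h1, lin_orth H, sub_self]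

theorem self_dual (H : Good e g) : SelfDualZ4 (cod e g) := by
  unfold SelfDualZ4 dualZ4
  ext x
  simp only [SetLike.mem_coe, Set.mem_ofPred_eq]
  constructor
  · intro hx y hy
    have hy1 := (mem_cod.1 hy).1
    obtain ⟨x', hxe, hx2, hx3⟩ := decomp H hx
    obtain ⟨y', hye, hy2, -⟩ := decomp H hy
    rw [hxe]
    simp only [Pi.add_apply, add_mul, Finset.sum_add_distrib, lin_dot _ y hy1, zero_add]
    rw [hye]
    simp only [Pi.add_apply, mul_add, Finset.sum_add_distrib]
    have h1 : ∑ j, x' j * lin g (fun i => y (e i)) j = 0 := by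
      rw [← lin_dot (fun i => y (e i)) x' hx3]
      exact Finset.sum_congr rfl fun j _ => mul_comm _ _
    rw [h1, zero_add]
    exact Finset.sum_eq_zero fun j _ => even_mul_even _ _ (hx2 j) (hy2 j)
  · intro hx
    refine mem_cod.2 ⟨fun i => hx _ (gen_mem H i), fun j => ?_⟩
    have hd : (fun m => 2 * ((if m = j then 1 else 0) + ∑ i, if m = e i then g i j else 0) :
        Fin 56 → ZMod 4) ∈ cod e g := by
      refine mem_of_even (fun m => two_mul_two_mul _) (fun l => ?_)
      have : ∀ m, 2 * ((if m = j then 1 else 0) + ∑ i, if m = e i then g i j else 0) * g l m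
          = 2 * ((if m = j then g l m else 0) + ∑ i, if m = e i then g i j * g l m else 0) := by
        intro m
        rw [mul_assoc, add_mul, Finset.sum_mul]
        simp only [ite_mul, one_mul, zero_mul]
      simp only [this, ← Finset.mul_sum, Finset.sum_add_distrib]
      rw [Finset.sum_comm]
      simp only [Finset.sum_ite_eq', Finset.mem_univ, if_true, H.hid, mul_ite, mul_one, mul_zero]
      simp only [Finset.sum_ite_eq, Finset.mem_univ, if_true]
      rw [← two_mul]
      exact two_mul_two_mul _
    have h := hx _ hd
    have : ∀ m, x m * (2 * ((if m = j then 1 else 0) + ∑ i, if m = e i then g i j else 0))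
          = 2 * ((if m = j then x m else 0) + ∑ i, if m = e i then x m * g i j else 0) := by
      intro m
      rw [mul_left_comm, mul_add, Finset.mul_sum]
      simp only [mul_ite, mul_one, mul_zero]
    simp only [this, ← Finset.mul_sum, Finset.sum_add_distrib] at h
    rw [Finset.sum_comm] at h
    simp only [Finset.sum_ite_eq', Finset.mem_univ, if_true] at h
    have key : ∀ a b : ZMod 4, 2 * (a + b) = 0 → 2 * a = 2 * b := by decide
    exact key _ _ h

/-- doubling, `ZMod 4 → ZMod 8` -/
def dbl : ZMod 4 →+ ZMod 8 where
  toFun a := 2 * (a.val : ZMod 8)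
  map_zero' := by decide
  map_add' := by decide

theorem lee_add (a b : ZMod 4) : ((leeVal (a + b) ^ 2 : ℕ) : ZMod 8) =
    ((leeVal a ^ 2 : ℕ) : ZMod 8) + ((leeVal b ^ 2 : ℕ) : ZMod 8) + dbl (a * b) := by
  revert a b; decide

theorem lee_mul (a b : ZMod 4) : ((leeVal (a * b) ^ 2 : ℕ) : ZMod 8) =
    ((leeVal a ^ 2 : ℕ) : ZMod 8) * ((leeVal b ^ 2 : ℕ) : ZMod 8) := by
  revert a b; decide

theorem lee_even (a u : ZMod 4) (ha : 2 * a = 0) (hu : 2 * u = 2) :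
    ((leeVal a ^ 2 : ℕ) : ZMod 8) = dbl (a * u) := by
  revert a u; decide

theorem q_add (x y : Fin 56 → ZMod 4) (h : ∑ j, x j * y j = 0) :
    ((eucWt (x + y) : ℕ) : ZMod 8) = (eucWt x : ZMod 8) + (eucWt y : ZMod 8) := by
  unfold eucWt
  rw [Nat.cast_sum, Nat.cast_sum, Nat.cast_sum]
  simp only [Pi.add_apply, lee_add, Finset.sum_add_distrib]
  rw [← map_sum, h, map_zero, add_zero]

theorem q_smul (a : ZMod 4) (y : Fin 56 → ZMod 4) (h : (eucWt y : ZMod 8) = 0) :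
    ((eucWt (fun j => a * y j) : ℕ) : ZMod 8) = 0 := by
  unfold eucWt at *
  rw [Nat.cast_sum] at *
  simp only [lee_mul]
  rw [← Finset.mul_sum, h, mul_zero]

theorem q_lin (H : Good e g) (c : Fin k → ZMod 4) (s : Finset (Fin k)) :
    ((eucWt (fun j => ∑ i ∈ s, c i * g i j) : ℕ) : ZMod 8) = 0 := by
  classical
  induction s using Finset.induction_on with
  | empty => simp [eucWt, leeVal]
  | insert a s ha ih =>
    have hs : (fun j => ∑ i ∈ insert a s, c i * g i j) =
        (fun j => c a * g a j) + (fun j => ∑ i ∈ s, c i * g i j) := by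
      funext j
      simp [Finset.sum_insert ha]
    rw [hs, q_add, ih, q_smul, add_zero]
    · exact (ZMod.natCast_eq_zero_iff _ _).2 (H.hnorm a)
    · simp only [Finset.mul_sum]
      rw [Finset.sum_comm]
      apply Finset.sum_eq_zero
      intro i _
      have : ∀ j, c a * g a j * (c i * g i j) = c a * c i * (g a j * g i j) := fun j => by ring
      simp only [this, ← Finset.mul_sum, H.horth, mul_zero]

theorem q_even (H : Good e g) (y : Fin 56 → ZMod 4) (h2 : ∀ j, 2 * y j = 0)
    (h : ∀ i, ∑ j, y j * g i j = 0) : ((eucWt y : ℕ) : ZMod 8) = 0 := by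
  unfold eucWt
  rw [Nat.cast_sum]
  rw [Finset.sum_congr rfl fun j _ => lee_even (y j) (∑ i, g i j) (h2 j) (H.hone j)]
  rw [← map_sum]
  simp only [Finset.mul_sum]
  rw [Finset.sum_comm]
  simp only [h, Finset.sum_const_zero, map_zero]

theorem type_two (H : Good e g) : TypeII (cod e g : Set (Fin 56 → ZMod 4)) := by
  intro x hx
  obtain ⟨y, hxe, hy2, hy3⟩ := decomp H hx
  rw [← ZMod.natCast_eq_zero_iff, hxe, q_add _ _ (lin_dot _ y hy3), q_even H y hy2 hy3]
  unfold lin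
  rw [q_lin H, add_zero]

theorem euc_ge_odd (x : Fin 56 → ZMod 4) :
    (Finset.univ.filter fun j => 2 * x j ≠ 0).card ≤ eucWt x := by
  unfold eucWt
  rw [Finset.card_filter]
  apply Finset.sum_le_sum
  intro j _
  generalize x j = a
  revert a; decide

theorem euc_even (x : Fin 56 → ZMod 4) (h : ∀ j, 2 * x j = 0) :
    eucWt x = 4 * (Finset.univ.filter fun j => x j ≠ 0).card := by
  unfold eucWt
  rw [Finset.card_filter, Finset.mul_sum]
  apply Finset.sum_congr rfl
  intro j _
  have := h j
  revert this
  generalize x j = a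
  revert a; decide

theorem euc_ge (H : Good e g) {x : Fin 56 → ZMod 4} (hx : x ∈ cod e g) (h0 : x ≠ 0) :
    24 ≤ eucWt x := by
  have h8 : 8 ∣ eucWt x := type_two H x hx
  obtain ⟨h1, h2⟩ := mem_cod.1 hx
  have hm := H.hmin (fun i => x (e i))
  simp only [← h2] at hm
  rcases hm with hm | hm
  · have hev : ∀ j, 2 * x j = 0 := by
      intro j
      by_contra hj
      have : j ∈ (Finset.univ.filter fun j => 2 * x j ≠ 0) := by simpa using hj
      rw [Finset.card_eq_zero.1 hm] at this
      simp at this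
    have hs := H.hsid x hev h1
    have he := euc_even x hev
    have hc : (Finset.univ.filter fun j => x j ≠ 0).card ≠ 0 := by
      intro hc
      apply h0
      funext j
      by_contra hj
      have : j ∈ (Finset.univ.filter fun j => x j ≠ 0) := by simpa using hj
      rw [Finset.card_eq_zero.1 hc] at this
      simp at this
    omega
  · have := euc_ge_odd x
    omega

theorem min_euc (H : Good e g) : minEuc (cod e g : Set (Fin 56 → ZMod 4)) = 24 := by
  unfold minEuc
  apply IsLeast.csInf_eq
  constructor
  · obtain ⟨y, h1, h2, h3⟩ := H.hword
    refine ⟨y, mem_of_even h1 h2, ?_, h3⟩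
    rintro rfl
    simp [eucWt, leeVal] at h3
  · rintro d ⟨x, hx, h0, rfl⟩
    exact euc_ge H hx h0

theorem res_card (H : Good e g) : (residue (cod e g : Set (Fin 56 → ZMod 4))).ncard = 2 ^ k := by
  set f := ZMod.castHom (by norm_num : (2 : ℕ) ∣ 4) (ZMod 2) with hf
  have hpar : ∀ a b : ZMod 4, 2 * a = 2 * b → f a = f b := by
    rw [hf]; decide
  have hsurj : ∀ a : ZMod 2, ∃ b : ZMod 4, f b = a := by
    rw [hf]; decide
  let φ : (Fin k → ZMod 2) → (Fin 56 → ZMod 2) := fun c j => ∑ i, c i * f (g i j)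
  have hφ : Function.Injective φ := by
    intro c c' h
    funext i
    have := congrFun h (e i)
    simpa [φ, H.hid, apply_ite f] using this
  have hr : residue (cod e g : Set (Fin 56 → ZMod 4)) = Set.range φ := by
    ext z
    constructor
    · rintro ⟨x, hx, rfl⟩
      refine ⟨fun i => f (x (e i)), ?_⟩
      funext j
      have := hpar _ _ ((mem_cod.1 hx).2 j)
      simp only [φ, res2]
      rw [← hf, this, map_sum]
      simp
    · rintro ⟨c, rfl⟩
      choose b hb using hsurj
      refine ⟨lin g (fun i => b (c i)), ?_, ?_⟩
      · refine mem_cod.2 ⟨lin_orth H _, fun j => ?_⟩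
        simp [lin, H.hid]
      · funext j
        simp only [res2, φ, lin]
        rw [← hf, map_sum]
        simp [hb]
  rw [hr, ← Set.image_univ, Set.ncard_image_of_injective _ hφ, Set.ncard_univ]
  simp

end abstract_part

theorem equiv_res_card {C C' : Set (Fin 56 → ZMod 4)} (h : Z4Equiv C C') :
    (residue C').ncard = (residue C).ncard := by
  obtain ⟨σ, ε, hε, rfl⟩ := h
  have : residue ((fun x => fun i => ε i * x (σ i)) '' C) =
      (fun z : Fin 56 → ZMod 2 => fun i => z (σ i)) '' residue C := by
    unfold residue
    rw [Set.image_image, Set.image_image]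
    apply Set.image_congr
    intro x _
    funext i
    simp only [res2, map_mul]
    rcases hε i with h | h <;> rw [h]
    · simp
    · have : ∀ a : ZMod 2, -a = a := by decide
      simp [this]
  rw [this]
  apply Set.ncard_image_of_injective
  intro a b hab
  funext i
  have := congrFun hab (σ.symm i)
  simpa using this

end Z4Note

/-! ## The concrete codes: reduction to computations with natural numbers -/

namespace Z4Note

/-- base 4 digit -/
def dig (r j : ℕ) : ℕ := (r >>> (2 * j)) % 4

/-- `∑ i < n, f i`, in a form that the kernel evaluates quickly -/
def ssum (f : ℕ → ℕ) : ℕ → ℕ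
  | 0 => 0
  | n + 1 => f n + ssum f n

theorem ssum_eq (f : ℕ → ℕ) (n : ℕ) : ssum f n = ∑ i : Fin n, f i := by
  induction n with
  | zero => simp [ssum]
  | succ n ih => rw [ssum, ih, Fin.sum_univ_castSucc, add_comm]; simp

/-- the parities of `f 0, …, f (n-1)` as digits in base `2^s` -/
def enc (s : ℕ) : (ℕ → ℕ) → ℕ → ℕ
  | _, 0 => 0
  | f, n + 1 => f 0 % 2 + 2 ^ s * enc s (fun i => f (i + 1)) n

theorem enc_congr (s : ℕ) (n : ℕ) : ∀ (f f' : ℕ → ℕ), (∀ i < n, f i % 2 = f' i % 2) →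
    enc s f n = enc s f' n := by
  induction n with
  | zero => intros; rfl
  | succ n ih =>
    intro f f' h
    simp only [enc]
    rw [h 0 (by omega), ih _ (fun i => f' (i + 1)) (fun i hi => h (i + 1) (by omega))]

theorem enc_xor (s : ℕ) (hs : 0 < s) (n : ℕ) : ∀ (f f' : ℕ → ℕ),
    enc s f n ^^^ enc s f' n = enc s (fun i => f i + f' i) n := by
  induction n with
  | zero => intros; simp [enc]
  | succ n ih =>
    intro f f'
    simp only [enc]
    rw [← ih]
    have hp : 2 ≤ 2 ^ s := by
      calc 2 = 2 ^ 1 := rfl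
        _ ≤ 2 ^ s := Nat.pow_le_pow_right (by norm_num) hs
    generalize enc s (fun i => f (i + 1)) n = A
    generalize enc s (fun i => f' (i + 1)) n = B
    have key : ∀ a b, a < 2 → b < 2 → a ^^^ b = (a + b) % 2 := by
      intro a b ha hb
      interval_cases a <;> interval_cases b <;> rfl
    have ha : f 0 % 2 < 2 := Nat.mod_lt _ (by norm_num)
    have hb : f' 0 % 2 < 2 := Nat.mod_lt _ (by norm_num)
    rw [Nat.add_mod]
    generalize f 0 % 2 = a at *
    generalize f' 0 % 2 = b at *
    have hd : ∀ c D, c < 2 → (c + 2 ^ s * D) / 2 ^ s = D ∧ (c + 2 ^ s * D) % 2 ^ s = c := by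
      intro c D hc
      constructor
      · rw [Nat.add_mul_div_left _ _ (by omega), Nat.div_eq_of_lt (by omega), zero_add]
      · rw [Nat.add_mul_mod_self_left, Nat.mod_eq_of_lt (by omega)]
    rw [← Nat.mod_add_div ((a + 2 ^ s * A) ^^^ (b + 2 ^ s * B)) (2 ^ s),
      Nat.xor_div_two_pow, Nat.xor_mod_two_pow, (hd a A ha).1, (hd a A ha).2,
      (hd b B hb).1, (hd b B hb).2, key a b ha hb]

theorem enc_mod (n : ℕ) : ∀ f : ℕ → ℕ, enc 6 f n ≡ ∑ i : Fin n, f i % 2 [MOD 63] := by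
  induction n with
  | zero => intro f; rfl
  | succ n ih =>
    intro f
    rw [Fin.sum_univ_succ]
    simp only [enc]
    apply Nat.ModEq.add
    · rfl
    · have h1 : 2 ^ 6 ≡ 1 [MOD 63] := by decide
      have := h1.mul (ih (fun i => f (i + 1)))
      simpa using this

theorem enc_zero (s : ℕ) (n : ℕ) : ∀ f : ℕ → ℕ, enc s f n = 0 → ∀ i < n, f i % 2 = 0 := by
  induction n with
  | zero => intro f _ i hi; omega
  | succ n ih =>
    intro f h i hi
    simp only [enc] at h
    have h1 : f 0 % 2 = 0 := by omega
    have h2 : enc s (fun i => f (i + 1)) n = 0 := by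
      have : 2 ^ s * enc s (fun i => f (i + 1)) n = 0 := by omega
      rcases Nat.mul_eq_zero.1 this with h | h
      · exact absurd h (by positivity)
      · exact h
    cases i with
    | zero => exact h1
    | succ i => exact ih _ h2 i (by omega)

/-- the final test: zero word or weight at least 20 -/
def leaf (a : ℕ) : Bool := bif Nat.beq a 0 then true else Nat.ble 20 (a % 63)

theorem leaf_sound (a : ℕ) (h : leaf a = true) : a = 0 ∨ 20 ≤ a % 63 := by
  unfold leaf at h
  cases hb : Nat.beq a 0 with
  | true => exact Or.inl (Nat.eq_of_beq_eq_true hb)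
  | false =>
    rw [hb] at h
    exact Or.inr (Nat.le_of_ble_eq_true h)

/-- test all sums of `acc` and rows of the list -/
def chk : List ℕ → ℕ → Bool
  | [], a => leaf a
  | r :: rs, a => bif chk rs a then chk rs (a ^^^ r) else false

/-- linear combination of row functions -/
def comb : List (ℕ → ℕ) → (ℕ → ℕ) → ℕ → ℕ
  | [], _, _ => 0
  | r :: L, c, j => c 0 * r j + comb L (fun i => c (i + 1)) j

theorem chk_sound (n : ℕ) (L : List (ℕ → ℕ)) : ∀ (a c : ℕ → ℕ),
    chk (L.map fun r => enc 6 r n) (enc 6 a n) = true →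
    leaf (enc 6 (fun j => a j + comb L c j) n) = true := by
  induction L with
  | nil => intro a c h; simpa [comb, chk] using h
  | cons r L ih =>
    intro a c h
    simp only [List.map_cons, chk, Bool.cond_false_right, Bool.and_eq_true] at h
    have hassoc : (fun j => a j + comb (r :: L) c j) =
        fun j => (a j + c 0 * r j) + comb L (fun i => c (i + 1)) j := by
      funext j; simp only [comb]; ring
    rw [hassoc]
    apply ih (fun j => a j + c 0 * r j)
    rcases Nat.even_or_odd (c 0) with hc | hc
    · rw [enc_congr 6 n _ a]
      · exact h.1
      · intro i _
        obtain ⟨m, hm⟩ := hc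
        rw [hm, Nat.add_mod, Nat.mul_mod]
        have : (m + m) % 2 = 0 := by omega
        rw [this]; simp
    · rw [enc_congr 6 n _ (fun j => a j + r j), ← enc_xor 6 (by norm_num)]
      · exact h.2
      · intro i _
        obtain ⟨m, hm⟩ := hc
        have : a i + c 0 * r i = a i + r i + 2 * (m * r i) := by rw [hm]; ring
        rw [this]; omega

theorem comb_ofFn (k : ℕ) : ∀ (F : Fin k → ℕ → ℕ) (c : ℕ → ℕ) (j : ℕ),
    comb (List.ofFn F) c j = ∑ i : Fin k, c i * F i j := by
  induction k with
  | zero => intro F c j; simp [comb]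
  | succ k ih =>
    intro F c j
    rw [List.ofFn_succ, comb, ih, Fin.sum_univ_succ]
    simp

/-- duplicate-freeness test with a bitmap -/
def nd : List ℕ → ℕ → Bool
  | [], _ => true
  | v :: vs, bm => bif Nat.beq ((bm >>> v) % 2) 0 then nd vs (bm ||| 2 ^ v) else false

theorem nd_sound (L : List ℕ) : ∀ bm, nd L bm = true →
    L.Nodup ∧ ∀ v ∈ L, bm.testBit v = false := by
  induction L with
  | nil => intro bm _; simp
  | cons v L ih =>
    intro bm h
    simp only [nd, Bool.cond_false_right, Bool.and_eq_true] at h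
    obtain ⟨h1, h2⟩ := h
    obtain ⟨h3, h4⟩ := ih _ h2
    have h1 := Nat.eq_of_beq_eq_true h1
    have h5 : bm.testBit v = false := by
      rw [Nat.testBit_eq_decide_div_mod_eq, ← Nat.shiftRight_eq_div_pow, h1]; rfl
    refine ⟨List.nodup_cons.2 ⟨fun hv => ?_, h3⟩, fun w hw => ?_⟩
    · have := h4 v hv
      simp at this
    · rcases List.mem_cons.1 hw with rfl | hw
      · exact h5
      · have := h4 w hw
        simp only [Nat.testBit_or, Bool.or_eq_false_iff] at this
        exact this.1

/-- index pairs -/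
def prs : List (ℕ × ℕ) := (List.range 56).flatMap fun b => (List.range b).map fun a => (a, b)

theorem mem_prs {a b : ℕ} (h : a < b) (hb : b < 56) : (a, b) ∈ prs := by
  simp [prs, h, hb]

/-- Everything that has to be computed about one code. -/
structure Check (k : ℕ) (R E H : List ℕ) (W : ℕ) : Prop where
  id : ∀ i < k, ∀ l < k, dig (R.getD i 0) l = if i = l then 1 else 0
  orth : ∀ i < k, ∀ l < k,
    ssum (fun j => dig (R.getD i 0) j * dig (R.getD l 0) j) 56 % 4 = 0
  norm : ∀ i < k, ssum (fun j => (min (dig (R.getD i 0) j) (4 - dig (R.getD i 0) j)) ^ 2) 56 % 8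
    = 0
  one : ∀ j < 56, ssum (fun i => dig (R.getD i 0) j) k % 2 = 1
  encs : List.ofFn (fun i : Fin k => enc 6 (fun j => dig (R.getD i 0) j) 56) = E
  min : chk E 0 = true
  cols : ∀ j < 56, enc 1 (fun i => dig (R.getD i 0) j) k = H.getD j 0
  nodup : nd (prs.map fun p => H.getD p.1 0 ^^^ H.getD p.2 0) 0 = true
  weven : ∀ j < 56, dig W j % 2 = 0
  worth : ∀ i < k, ssum (fun j => dig W j * dig (R.getD i 0) j) 56 % 4 = 0
  wwt : ssum (fun j => (Nat.min (dig W j) (4 - dig W j)) ^ 2) 56 = 24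

/-- the generators -/
def gen (k : ℕ) (R : List ℕ) : Fin k → Fin 56 → ZMod 4 :=
  fun i j => ((dig (R.getD i 0) j : ℕ) : ZMod 4)

theorem dig_lt (r j : ℕ) : dig r j < 4 := Nat.mod_lt _ (by norm_num)

theorem two_mul_cast (a : ℕ) : 2 * (a : ZMod 4) = 0 ↔ a % 2 = 0 := by
  have : (2 : ZMod 4) * (a : ZMod 4) = ((2 * a : ℕ) : ZMod 4) := by push_cast; rfl
  rw [this, ZMod.natCast_eq_zero_iff]
  omega

theorem leeVal_cast (a : ℕ) (h : a < 4) : leeVal (a : ZMod 4) = min a (4 - a) := by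
  unfold leeVal
  rw [ZMod.val_natCast, Nat.mod_eq_of_lt h]

section

variable {k : ℕ} {R E H : List ℕ} {W : ℕ}

theorem sidon (h : Check k R E H W) {a b c d : ℕ} (hab : a < b) (hb : b < 56) (hcd : c < d)
    (hd : d < 56)
    (hs : ∀ i < k, (dig (R.getD i 0) a + dig (R.getD i 0) b + dig (R.getD i 0) c +
      dig (R.getD i 0) d) % 2 = 0) : a = c ∧ b = d := by
  have hn := (nd_sound _ _ h.nodup).1
  have := List.inj_on_of_nodup_map hn (mem_prs hab hb) (mem_prs hcd hd)
  have h2 := this (by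
    simp only
    rw [← h.cols a (by omega), ← h.cols b hb, ← h.cols c (by omega), ← h.cols d hd,
      enc_xor 1 (by norm_num), enc_xor 1 (by norm_num)]
    apply enc_congr
    intro i hi
    have := hs i hi
    omega)
  simpa using h2

theorem even_sum {y : Fin 56 → ZMod 4} (h2 : ∀ j, 2 * y j = 0) (z : Fin 56 → ZMod 4) :
    ∑ j, y j * z j = 2 * ∑ j ∈ (Finset.univ.filter fun j => y j ≠ 0), z j := by
  rw [Finset.mul_sum, Finset.sum_filter]
  apply Finset.sum_congr rfl
  intro j _
  rcases even_cases _ (h2 j) with h | h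
  · simp [h]
  · rw [h, if_pos (by decide)]

theorem good_sid (h : Check k R E H W) (y : Fin 56 → ZMod 4) (h2 : ∀ j, 2 * y j = 0)
    (ho : ∀ i, ∑ j, y j * gen k R i j = 0) :
    (Finset.univ.filter fun j => y j ≠ 0).card ≠ 2 ∧
    (Finset.univ.filter fun j => y j ≠ 0).card ≠ 4 := by
  simp only [even_sum h2] at ho
  generalize (Finset.univ.filter fun j => y j ≠ 0) = s at *
  have hnat : ∀ i < k, (∑ j ∈ s, dig (R.getD i 0) j) % 2 = 0 := by
    intro i hi
    have := ho ⟨i, hi⟩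
    simp only [gen] at this
    rw [← Nat.cast_sum, two_mul_cast] at this
    exact this
  constructor
  · intro hc
    obtain ⟨a, b, hab, rfl⟩ := Finset.card_eq_two.1 hc
    have hab' : (a : ℕ) ≠ b := fun hh => hab (Fin.ext hh)
    have hp : ∀ i < k, (dig (R.getD i 0) a + dig (R.getD i 0) b) % 2 = 0 := by
      intro i hi
      have := hnat i hi
      rwa [Finset.sum_pair hab] at this
    obtain ⟨c, hc1, hc2, hc3⟩ : ∃ c : ℕ, c < 56 ∧ c ≠ a ∧ c ≠ b := by
      by_cases h0 : 0 ≠ (a : ℕ) ∧ 0 ≠ (b : ℕ)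
      · exact ⟨0, by norm_num, h0⟩
      by_cases h1 : 1 ≠ (a : ℕ) ∧ 1 ≠ (b : ℕ)
      · exact ⟨1, by norm_num, h1⟩
      · exact ⟨2, by norm_num, by omega, by omega⟩
    have ha := a.2
    have hb := b.2
    rcases lt_or_gt_of_ne hc2 with h1 | h1 <;> rcases lt_or_gt_of_ne hc3 with h3 | h3
    · have := sidon h h1 ha h3 hb (fun i hi => by have := hp i hi; omega)
      omega
    · have := sidon h h1 ha h3 hc1 (fun i hi => by have := hp i hi; omega)
      omega
    · have := sidon h h1 hc1 h3 hb (fun i hi => by have := hp i hi; omega)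
      omega
    · have := sidon h h1 hc1 h3 hc1 (fun i hi => by have := hp i hi; omega)
      omega
  · intro hc
    obtain ⟨a, t, hat, rfl, ht⟩ := Finset.card_eq_succ.1 hc
    obtain ⟨b, c, d, hbc, hbd, hcd, rfl⟩ := Finset.card_eq_three.1 ht
    simp only [Finset.mem_insert, Finset.mem_singleton, not_or] at hat
    obtain ⟨hab, hac, had⟩ := hat
    have hp : ∀ i < k, (dig (R.getD i 0) a + dig (R.getD i 0) b + dig (R.getD i 0) c +
        dig (R.getD i 0) d) % 2 = 0 := by
      intro i hi
      have := hnat i hi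
      rw [Finset.sum_insert (by simp [hab, hac, had]),
        Finset.sum_insert (by simp [hbc, hbd]), Finset.sum_pair hcd] at this
      omega
    have hab : (a : ℕ) ≠ b := fun hh => hab (Fin.ext hh)
    have hac : (a : ℕ) ≠ c := fun hh => hac (Fin.ext hh)
    have had : (a : ℕ) ≠ d := fun hh => had (Fin.ext hh)
    have hbc : (b : ℕ) ≠ c := fun hh => hbc (Fin.ext hh)
    have hbd : (b : ℕ) ≠ d := fun hh => hbd (Fin.ext hh)
    have hcd : (c : ℕ) ≠ d := fun hh => hcd (Fin.ext hh)
    have ha := a.2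
    have hb := b.2
    have hc' := c.2
    have hd := d.2
    rcases lt_or_gt_of_ne hab with h1 | h1 <;> rcases lt_or_gt_of_ne hcd with h3 | h3
    · have := sidon h h1 hb h3 hd (fun i hi => by have := hp i hi; omega)
      omega
    · have := sidon h h1 hb h3 hc' (fun i hi => by have := hp i hi; omega)
      omega
    · have := sidon h h1 ha h3 hd (fun i hi => by have := hp i hi; omega)
      omega
    · have := sidon h h1 ha h3 hc' (fun i hi => by have := hp i hi; omega)
      omega

theorem good_min (h : Check k R E H W) (c : Fin k → ZMod 4) :
    (Finset.univ.filter fun j => 2 * ∑ i, c i * gen k R i j ≠ 0).card = 0 ∨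
    20 ≤ (Finset.univ.filter fun j => 2 * ∑ i, c i * gen k R i j ≠ 0).card := by
  let cn : ℕ → ℕ := fun i => if hi : i < k then (c ⟨i, hi⟩).val else 0
  let F : Fin k → ℕ → ℕ := fun i j => dig (R.getD i 0) j
  let v : ℕ → ℕ := fun j => ∑ i : Fin k, cn i * F i j
  have hz : enc 6 (fun _ => 0) 56 = 0 := by decide +kernel
  have hE : E = (List.ofFn F).map fun r => enc 6 r 56 := by
    rw [← h.encs, List.map_ofFn]
    rfl
  have hm := h.min
  rw [hE, ← hz] at hm
  have hl := chk_sound 56 _ _ cn hm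
  simp only [comb_ofFn, zero_add] at hl
  change leaf (enc 6 v 56) = true at hl
  have hv : ∀ j : Fin 56, ∑ i, c i * gen k R i j = ((v j : ℕ) : ZMod 4) := by
    intro j
    simp only [v, gen, F, cn]
    rw [Nat.cast_sum]
    apply Finset.sum_congr rfl
    intro i _
    rw [Nat.cast_mul]
    simp
  have hcard : (Finset.univ.filter fun j => 2 * ∑ i, c i * gen k R i j ≠ 0).card =
      ∑ j : Fin 56, v j % 2 := by
    rw [Finset.card_filter]
    apply Finset.sum_congr rfl
    intro j _
    simp only [hv, ne_eq, two_mul_cast]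
    split_ifs with h' <;> omega
  have hle : ∑ j : Fin 56, v j % 2 ≤ 56 := by
    calc ∑ j : Fin 56, v j % 2 ≤ ∑ _j : Fin 56, 1 := Finset.sum_le_sum fun j _ => by omega
      _ = 56 := by simp
  rw [hcard]
  have hmod := enc_mod 56 v
  rcases leaf_sound _ hl with hb | hb
  · left
    apply Finset.sum_eq_zero
    intro j _
    exact enc_zero 6 56 v hb j j.2
  · right
    unfold Nat.ModEq at hmod
    omega

theorem good_of_check (hk : k ≤ 56) (h : Check k R E H W) :
    Good (Fin.castLE hk) (gen k R) where
  hid := by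
    intro i l
    simp only [gen, Fin.val_castLE]
    rw [h.id i i.2 l l.2]
    simp only [Fin.ext_iff]
    split_ifs <;> simp
  horth := by
    intro i l
    have := h.orth i i.2 l l.2
    rw [ssum_eq, ← Nat.dvd_iff_mod_eq_zero, ← ZMod.natCast_eq_zero_iff, Nat.cast_sum] at this
    simpa [gen] using this
  hnorm := by
    intro i
    have := h.norm i i.2
    rw [ssum_eq, ← Nat.dvd_iff_mod_eq_zero] at this
    unfold eucWt gen
    simp only [leeVal_cast _ (dig_lt _ _)]
    exact this
  hone := by
    intro j
    have := h.one j j.2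
    rw [ssum_eq] at this
    simp only [gen]
    rw [← Nat.cast_sum]
    generalize (∑ i : Fin k, dig (R.getD i 0) j) = m at this
    have hm : m = 2 * (m / 2) + 1 := by omega
    rw [hm]
    push_cast
    rw [mul_add, two_mul_two_mul, zero_add, mul_one]
  hmin := good_min h
  hsid := good_sid h
  hword := by
    refine ⟨fun j => ((dig W j : ℕ) : ZMod 4), fun j => ?_, fun i => ?_, ?_⟩
    · rw [two_mul_cast]
      exact h.weven j j.2
    · have := h.worth i i.2
      rw [ssum_eq, ← Nat.dvd_iff_mod_eq_zero, ← ZMod.natCast_eq_zero_iff, Nat.cast_sum] at this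
      simpa [gen] using this
    · have := h.wwt
      rw [ssum_eq] at this
      unfold eucWt
      simp only [leeVal_cast _ (dig_lt _ _)]
      exact this

end

/-- generators with entries as base 4 digits, residue dimension 13 -/
def rows13 : List ℕ := [
  4263809453303583150549451786944513, 4571361101070115811659229773692932,
  94692114588402583527417679183888, 520320796431712141372262954565696,
  3319929247832514409954432415432960, 967611234380963584267578651968512,
  648724469721331894589486591381504, 4689361976476904546541699831185408,
  3718932914664843588331246748499968, 4998340907736803951454849400569856,
  2521820225198568968909397699854336, 2157658876470938408686161118625792,
  4918062711593754064814751793283072]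

/-- the residues of the generators in base 64 -/
def encs13 : List ℕ := [
  2221426519394790356044926862769482044718429023024455447288613406308594056175833875113185810686410753,
  2187259198852673597251897275116732729688056091877892393802135452396008164961313739097971840109248576,
  533996759477552654153370933349164628821988045921390262596255484145236722268640303247352494297088,
  34184136306427531759120868292929777833584716935398996899063135319046276090125908716999754570268672,
  8343731692849024465273587641829704298922037985728860670254729879552912272568425627112261550080,
  542342527211849132695324216313550500725023162494178968238772537402761278839750639917975996465152,
  34718265472241005693001181097615345191689264538985486487265319780051118997316988421413521550475264,
  2187793067310216002859734476773869620732615957598570310765093778521003525478013126357380535710384128,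
  34718265440909639872404370838272650725507536803721288439113584427199553853668857935982514751406080,
  2221960644519362981557873590616645756493725488045147258268784775206915762397447940342614736609738752,
  2221960646556399077412035086140086270019012039937059332842931097672142476081110078699235581569794048,
  2187250855153819625138509497017428268916588092841912119030547186991876761358186158528939400760393728,
  2221426649765084949359198659880496033307741623539260836479180993512486459547405590796729432284332032]

/-- the columns of the residues -/
def cols13 : List ℕ := [
  1, 2, 4, 8, 16, 32, 64, 128, 256, 512,
  1024, 2048, 4096, 8191, 2392, 6495, 4433, 3618, 4026, 3098,
  3931, 1837, 4811, 3463, 3313, 2717, 7764, 982, 4514, 2884,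
  6646, 4243, 2342, 7603, 1177, 1438, 5036, 3017, 6268, 4887,
  2607, 7984, 3414, 2515, 6361, 4701, 3243, 3641, 3868, 1784,
  5601, 8002, 506, 2020, 5961, 7811]

/-- an even codeword of weight 24 -/
def word13 : ℕ := 158456325028528677386111164458

theorem check13 : Check 13 rows13 encs13 cols13 word13 where
  id := by decide +kernel
  orth := by decide +kernel
  norm := by decide +kernel
  one := by decide +kernel
  encs := by decide +kernel
  min := by decide +kernel
  cols := by decide +kernel
  nodup := by decide +kernel
  weven := by decide +kernel
  worth := by decide +kernel
  wwt := by decide +kernel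

/-- generators with entries as base 4 digits, residue dimension 14 -/
def rows14 : List ℕ := [
  2378814535626101169748366715781121, 4326914048779023071813809632968708,
  3159717701620940472971176097873936, 3270911577970473515510648151212096,
  4773670312469486725972027852718336, 4143221870770605102167675092599808,
  205839600684746298350480404779008, 1439333555705202246467601054056448,
  1233382600185379145648735497814016, 3764633707528703397955634108563456,
  638028444773566741069832700035072, 2817746567146032065387464285487104,
  262190178651639879465773465337856, 2973967844584773115447407764570112]

/-- the residues of the generators in base 64 -/
def encs14 : List ℕ := [
  2221968988186396158663522869028437482553387619474133911008365831845111346989438999022203566097956865,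
  2221968990255758145394287976754409006073061009160978582355925226933732425023187865163663500487163968,
  34184266644893559330792479719853780321437998716172806232477444277233894221391436105050310725079040,
  8474101490361936401756211550008239712019312521392025918345647354109105771380698312194553806848,
  2187259200921538260716139414171632909848626345583594865243056775078919923525064047610539261458120704,
  2187784851944131097033249399849866027519456749350705564865642349747528609037973729728051499554045952,
  31828689057014060118713885300067959195186830687780611467844357926809031756148222325686272,
  2187784853981167192886940490066007391431773006409170378613722055360648670787014221030003160553357312,
  34709919736351176705046772754450680689719616158230634321916620260156461970109223246044900611850240,
  34184138342966182960066813093755064026687437023070564962224712673802887902929961950016083182223360,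
  34718265472738328928947914255056299493611165814006309452271480824113265827081539803902813973512192,
  130402139066526855362167045802301031518699320804376761354126212218065667677029428011445780480,
  534127161616495867050901328076720497160802776739771765475757710876399391858979077509854118543360,
  34175792574742331994359770450196150006280959374012431717373391098215804152151263785818592768950272]

/-- the columns of the residues -/
def cols14 : List ℕ := [
  1, 2, 4, 8, 16, 32, 64, 128, 256, 512,
  1024, 2048, 4096, 8192, 16381, 8696, 7632, 4221, 15905, 3512,
  12112, 14209, 15901, 3296, 10944, 14465, 2041, 4053, 12173, 5822,
  8730, 1967, 6371, 391, 6834, 2422, 13174, 15498, 4947, 11462,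
  11318, 9718, 12107, 8235, 1770, 7279, 2975, 15267, 5382, 8186,
  1682, 7615, 1567, 5539, 9991, 179]

/-- an even codeword of weight 24 -/
def word14 : ℕ := 147573952589676576810

theorem check14 : Check 14 rows14 encs14 cols14 word14 where
  id := by decide +kernel
  orth := by decide +kernel
  norm := by decide +kernel
  one := by decide +kernel
  encs := by decide +kernel
  min := by decide +kernel
  cols := by decide +kernel
  nodup := by decide +kernel
  weven := by decide +kernel
  worth := by decide +kernel
  wwt := by decide +kernel

/-- generators with entries as base 4 digits, residue dimension 15 -/
def rows15 : List ℕ := [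
  1036721094952345212052500822097921, 4326914048779023071813809632968708,
  1730765622735411635341155270393872, 3435104960498006200536723898761280,
  1469743666561811686634650601521408, 355961006802259731489220460545024,
  1142461179846635462573247623598080, 1807216428507704878635920262184960,
  3435571495550346134112048989143040, 2661385039686931419298678714925056,
  4086194858311611155213166102708224, 1078760009832513640788617997582336,
  4859126454443825850746699388026880, 4067583164125362973885058978414592,
  732420649433801864981424128393216]

/-- the residues of the generators in base 64 -/
def encs15 : List ℕ := [
  34184138343463384750020936883339001370642029818323913497428351505895715724591130626560210073812993,
  2221968990255758145394287976754409006073061009160978582355925226933732425023187865163663500487163968,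
  2221968990255758145394287861881304603973660787365126637001287420544044435544378852173580127621353472,
  8476139023661477647619066268110811587573637124682930222199776168190082201131025323856419356672,
  2187250857222186845847136615874323841008211747055470557050062603249860351967939164424628826301005824,
  34184136305930208493068306805589985098439479286767355848002959845795899896943787100666717481730048,
  34175924982578117001537419151305947360019008508270732482278930092209489406365221239266577903255552,
  2221434863094149300682674521097160565884551264102443890267258909603740751492414557589759627846746112,
  8474070158874698536013460008643366226981399375424721477015554317908242267292344116248194318336,
  8345768728825329308473699976229362085813321042273748231022172047811350582419286850137166446592,
  2187259200922035464462523801641838372381116723327474163984250516816152828841855682424217627426553856,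
  34718133065407759279726973803254902283164203998332544578833496840710640768796853322439475089899520,
  2187793067278394966855773437554214043235125670972544659008233657229096457426656036554920425791946752,
  2187250724814840734816672041260494350447736862727134091759981830887111258354824250465558614029369344,
  533998827852783078149023969117931711246091034307796716866850046397672394489240140036896655933440]

/-- the columns of the residues -/
def cols15 : List ℕ := [
  1, 2, 4, 8, 16, 32, 64, 128, 256, 512,
  1024, 2048, 4096, 8192, 16384, 32761, 11252, 7253, 25437, 24757,
  18213, 31237, 5916, 18372, 31117, 9492, 5076, 20052, 22700, 7403,
  22386, 3506, 14282, 24955, 20906, 25826, 30866, 12851, 19139, 26267,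
  32298, 15619, 7046, 21022, 3286, 16062, 26670, 23287, 3919, 28223,
  22239, 1374, 8111, 22534, 2279, 13462]

/-- an even codeword of weight 24 -/
def word15 : ℕ := 659178312118688512150322521571466

theorem check15 : Check 15 rows15 encs15 cols15 word15 where
  id := by decide +kernel
  orth := by decide +kernel
  norm := by decide +kernel
  one := by decide +kernel
  encs := by decide +kernel
  min := by decide +kernel
  cols := by decide +kernel
  nodup := by decide +kernel
  weven := by decide +kernel
  worth := by decide +kernel
  wwt := by decide +kernel

end Z4Note

open Z4Note in
/-- there are at least three pairwise inequivalent extremal Type II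
`ZMod 4`-codes of length 56. -/
theorem three_inequivalent_extremal_typeII_length56 :
    ∃ Cs : Fin 3 → Submodule (ZMod 4) (Fin 56 → ZMod 4),
      (∀ i, SelfDualZ4 (Cs i) ∧ TypeII ((Cs i : Set (Fin 56 → ZMod 4))) ∧
        minEuc ((Cs i : Set (Fin 56 → ZMod 4))) = 24) ∧
      ∀ i j, i ≠ j →
        ¬ Z4Equiv ((Cs i : Set (Fin 56 → ZMod 4))) ((Cs j : Set (Fin 56 → ZMod 4))) := by
  have G0 := good_of_check (by norm_num) check13
  have G1 := good_of_check (by norm_num) check14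
  have G2 := good_of_check (by norm_num) check15
  have r0 := res_card G0
  have r1 := res_card G1
  have r2 := res_card G2
  refine ⟨![cod (Fin.castLE (by norm_num)) (gen 13 rows13),
    cod (Fin.castLE (by norm_num)) (gen 14 rows14),
    cod (Fin.castLE (by norm_num)) (gen 15 rows15)], ?_, ?_⟩
  · intro i
    fin_cases i
    · exact ⟨self_dual G0, type_two G0, min_euc G0⟩
    · exact ⟨self_dual G1, type_two G1, min_euc G1⟩
    · exact ⟨self_dual G2, type_two G2, min_euc G2⟩
  · intro i j hij h
    have hc := equiv_res_card h
    fin_cases i <;> fin_cases j <;> first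
      | exact absurd rfl hij
      | (simp [r0, r1, r2] at hc)
end
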